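/- arXiv:2408.01992 — 2 statements merged into one kernel-verified Lean document; each statement's English description precedes it below -/
import Mathlib

section
/- Let n ≥ 2, let M be a closed connected topological n-manifold, and let f : M → M be a regular homeomorphism such that no point of its chain recurrent set has Morse index 1 or n−1. Then f is polar: the chain recurrent set R_f contains exactly one point of Morse index 0 (a unique sink, which is a fixed point of f) and exactly one point of Morse index n (a unique source, which is a fixed point of f). -/
open Filter Topology

/-- `M` is a topological `n`-manifold without boundary: every point has an open
neighbourhood homeomorphic to `ℝⁿ`. -/
def IsChartedEuclidean (n : ℕ) (M : Type*) [TopologicalSpace M] : Prop :=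
  ∀ x : M, ∃ U : Set M, IsOpen U ∧ x ∈ U ∧ Nonempty (U ≃ₜ EuclideanSpace ℝ (Fin n))

/-- An `ε`-chain of the map `f` from `x` to `y`. -/
def IsEpsChain {M : Type*} [PseudoMetricSpace M] (f : M → M) (ε : ℝ) (x y : M) : Prop :=
  ∃ k : ℕ, 0 < k ∧ ∃ (c : Fin (k + 1) → M) (m : Fin k → ℕ),
    c 0 = x ∧ c (Fin.last k) = y ∧ (∀ i, 1 ≤ m i) ∧
    ∀ i : Fin k, dist (f^[m i] (c i.castSucc)) (c i.succ) < ε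

/-- A point is chain recurrent for `f` if for every `ε > 0` there is an `ε`-chain
from the point to itself. -/
def ChainRecurrent {M : Type*} [PseudoMetricSpace M] (f : M → M) (x : M) : Prop :=
  ∀ ε : ℝ, 0 < ε → IsEpsChain f ε x x

/-- The chain recurrent set of `f`. -/
def chainRecurrentSet {M : Type*} [PseudoMetricSpace M] (f : M → M) : Set M :=
  {x | ChainRecurrent f x}

/-- The canonical hyperbolic model map `a_{i,δu,δs} : ℝⁿ → ℝⁿ`,
`a(x₁,…,xₙ) = (2δu·x₁, 2x₂, …, 2x_i, (δs/2)·x_{i+1}, x_{i+2}/2, …, xₙ/2)`. -/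
noncomputable def modelMap (n i : ℕ) (δu δs : ℝ) :
    EuclideanSpace ℝ (Fin n) → EuclideanSpace ℝ (Fin n) :=
  fun x => WithLp.toLp 2 fun j =>
    if (j : ℕ) < i then (if (j : ℕ) = 0 then 2 * δu else 2) * x j
    else (if (j : ℕ) = i then δs / 2 else 1 / 2) * x j

/-- A point `p` is a topologically hyperbolic periodic point of the homeomorphism `f`
with Morse index `i`: `p` is periodic of some least period `m` and `f^m` is conjugate,
in a neighbourhood of `p`, to the model map `a_{i,δu,δs}` on `ℝⁿ`. -/
def TopHyperbolic {M : Type*} [MetricSpace M] (n : ℕ) (f : M ≃ₜ M) (p : M) (i : ℕ) : Prop :=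
  ∃ m : ℕ, 0 < m ∧ Function.IsPeriodicPt (⇑f) m p ∧ Function.minimalPeriod (⇑f) p = m ∧
    ∃ δu δs : ℝ, (δu = 1 ∨ δu = -1) ∧ (δs = 1 ∨ δs = -1) ∧
      ∃ (U : Set M) (_ : IsOpen U) (_ : p ∈ U) (h : U ≃ₜ EuclideanSpace ℝ (Fin n)),
        ∀ x : U, (⇑f)^[m] (x : M) = ((h.symm (modelMap n i δu δs (h x)) : U) : M)

/-- A homeomorphism is regular if its chain recurrent set is finite and consists of
topologically hyperbolic periodic points (of some Morse index `i ∈ {0,…,n}`). -/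
def RegularHomeo {M : Type*} [MetricSpace M] (n : ℕ) (f : M ≃ₜ M) : Prop :=
  (chainRecurrentSet (⇑f)).Finite ∧
    ∀ p ∈ chainRecurrentSet (⇑f), ∃ i ≤ n, TopHyperbolic n f p i

/-- The stable manifold `W^s_p = {q : f^{km}(q) → p, k → +∞}`, `m` the least period. -/
def stableSet {M : Type*} [MetricSpace M] (f : M ≃ₜ M) (p : M) : Set M :=
  {q | Tendsto (fun k : ℕ => (⇑f)^[k * Function.minimalPeriod (⇑f) p] q) atTop (𝓝 p)}

/-- The unstable manifold `W^u_p = {q : f^{-km}(q) → p, k → +∞}`, `m` the least period. -/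
def unstableSet {M : Type*} [MetricSpace M] (f : M ≃ₜ M) (p : M) : Set M :=
  {q | Tendsto (fun k : ℕ => (⇑f.symm)^[k * Function.minimalPeriod (⇑f) p] q) atTop (𝓝 p)}

/-- A saddle periodic point: topologically hyperbolic of Morse index `0 < i < n`. -/
def IsSaddlePt {M : Type*} [MetricSpace M] (n : ℕ) (f : M ≃ₜ M) (p : M) : Prop :=
  ∃ i, 0 < i ∧ i < n ∧ TopHyperbolic n f p i

/-- A subset `S ⊆ M` is a locally flat `k`-dimensional submanifold of the `n`-manifold
`M`: every `x ∈ S` has an open neighbourhood `U` and a homeomorphism `ψ : U ≃ₜ ℝⁿ` with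
`ψ(U ∩ S) = ℝᵏ × {0}`. -/
def IsLocallyFlatSubmanifold (n k : ℕ) {M : Type*} [TopologicalSpace M] (S : Set M) : Prop :=
  ∀ x ∈ S, ∃ U : Set M, IsOpen U ∧ x ∈ U ∧
    ∃ ψ : U ≃ₜ EuclideanSpace ℝ (Fin n),
      ψ '' {y : U | (y : M) ∈ S} = {y | ∀ j : Fin n, k ≤ (j : ℕ) → y j = 0}

/-!
Let `g` be a power of `f` which fixes every chain recurrent point. Every orbit of `g` converges to a
fixed point in forward and in backward time, and there are no cycles of heteroclinic orbits, because
the points on such a cycle would be chain recurrent. The basins of the saddles and sources are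
nowhere dense, so the basins of the sinks, which are open and disjoint, have a dense union.

Suppose that there are two sinks. Let `A` be the basin of one and `B` the union of the basins of the
others. Since the space is connected, `Z = closure A ∩ closure B` is nonempty, and since there are
no cycles, the invariant closed set `Z` contains a fixed point `p` from which no orbit in `Z`
emanates. The orbits of `A` and of `B` that pass near `p` accumulate on the punctured unstable set
of `p`, which is connected because the Morse index of `p` is not `1`. So `closure A` and `closure B`
meet on it, a contradiction.

Thus `g` has a single sink, and it is fixed by `f`, which permutes the sinks of `g`. Sources are
the sinks of the inverse, for which index `n - 1` plays the role of index `1`.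
-/

section Basin

variable {X : Type*} [TopologicalSpace X] {g : X → X} {p q x : X}

/-- The basin of `p` under `g`: the points whose forward orbit converges to `p`. For a fixed
point `p` this is the stable set of `p`. -/
def basin (g : X → X) (p : X) : Set X :=
  {x | Tendsto (fun k : ℕ => g^[k] x) atTop (𝓝 p)}

/-- The point `p` is attracting for `g`: its basin is a neighbourhood of it. -/
def IsAttractingPt (g : X → X) (p : X) : Prop :=
  basin g p ∈ 𝓝 p

theorem mem_basin_self (hp : Function.IsFixedPt g p) : p ∈ basin g p := by
  simp only [basin, Set.mem_ofPred_eq, Function.iterate_fixed hp, tendsto_const_nhds]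

theorem iterate_mem_basin_iff (k : ℕ) : g^[k] x ∈ basin g p ↔ x ∈ basin g p := by
  simp only [basin, Set.mem_ofPred_eq, ← Function.iterate_add_apply]
  exact tendsto_add_atTop_iff_nat (f := fun i => g^[i] x) k

theorem mapsTo_basin : Set.MapsTo g (basin g p) (basin g p) :=
  fun _ => (iterate_mem_basin_iff 1).2

theorem mem_of_mem_basin {Z : Set X} (hZ : IsClosed Z) (hmaps : Set.MapsTo g Z Z) (hx : x ∈ Z)
    (hxp : x ∈ basin g p) : p ∈ Z :=
  hZ.mem_of_tendsto hxp (.of_forall fun k => hmaps.iterate k hx)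

theorem disjoint_basin [T2Space X] (hpq : p ≠ q) : Disjoint (basin g p) (basin g q) :=
  Set.disjoint_left.2 fun _ hp hq => hpq (tendsto_nhds_unique hp hq)

theorem eq_of_mem_basin [T2Space X] (hx : Function.IsFixedPt g x) (hxp : x ∈ basin g p) : x = p :=
  tendsto_nhds_unique (mem_basin_self hx) hxp

theorem isFixedPt_of_mem_basin [T2Space X] (hg : Continuous g) (hx : x ∈ basin g p) :
    Function.IsFixedPt g p :=
  isFixedPt_of_tendsto_iterate hx hg.continuousAt

theorem IsAttractingPt.mem_basin (hp : IsAttractingPt g p) : p ∈ basin g p :=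
  mem_of_mem_nhds hp

theorem IsAttractingPt.isFixedPt [T2Space X] (hp : IsAttractingPt g p) (hg : Continuous g) :
    Function.IsFixedPt g p :=
  isFixedPt_of_mem_basin hg hp.mem_basin

theorem IsAttractingPt.isOpen_basin (hp : IsAttractingPt g p) (hg : Continuous g) :
    IsOpen (basin g p) := by
  refine isOpen_iff_mem_nhds.2 fun x hx => ?_
  obtain ⟨k, hk⟩ := (hx.eventually (eventually_mem_nhds_iff.2 hp)).exists
  filter_upwards [(hg.iterate k).continuousAt.preimage_mem_nhds hk] with y hy
  exact (iterate_mem_basin_iff k).1 hy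

theorem IsAttractingPt.map_of_commute {f : X ≃ₜ X} (hp : IsAttractingPt g p)
    (hfg : Function.Commute f g) : IsAttractingPt g (f p) := by
  have hmaps : f '' basin g p ⊆ basin g (f p) := by
    rintro _ ⟨x, hx, rfl⟩
    exact ((f.continuous.tendsto p).comp hx).congr fun k => hfg.iterate_right k x
  exact mem_of_superset (f.isOpenMap.image_mem_nhds hp) hmaps

end Basin

section CoordinateProjection

variable {ι : Type*} {E : Set ι}

theorem continuous_indicator_pi : Continuous fun v : ι → ℝ => E.indicator v := by
  refine continuous_pi fun j => ?_
  by_cases hj : j ∈ E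
  · simpa only [Set.indicator_of_mem hj] using continuous_apply j
  · simpa only [Set.indicator_of_notMem hj] using continuous_const

theorem isNowhereDense_setOf_indicator_eq_zero (hE : E.Nonempty) :
    IsNowhereDense {v : ι → ℝ | E.indicator v = 0} := by
  obtain ⟨j, hj⟩ := hE
  have hclosed : IsClosed {v : ι → ℝ | v j = 0} :=
    isClosed_eq (continuous_apply j) continuous_const
  have hdense : Dense {v : ι → ℝ | v j = 0}ᶜ :=
    (dense_compl_singleton (0 : ℝ)).preimage (isOpenMap_eval j)
  refine IsNowhereDense.mono (fun v hv => ?_)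
    (isClosed_isNowhereDense_iff_compl.2 ⟨hclosed.isOpen_compl, hdense⟩).2
  exact (Set.indicator_of_mem hj v).symm.trans (congrFun hv j)

theorem image_extend_compl_singleton_zero :
    (fun u : E → ℝ => Function.extend Subtype.val u (0 : ι → ℝ)) '' {0}ᶜ =
      {v | v ≠ 0 ∧ Eᶜ.indicator v = 0} := by
  have hinj := Function.extend_injective (Subtype.val_injective (p := (· ∈ E))) (0 : ι → ℝ)
  have hzero : Function.extend Subtype.val (0 : E → ℝ) (0 : ι → ℝ) = 0 :=
    Function.extend_zero _
  have hcoord : ∀ v : ι → ℝ, Eᶜ.indicator v = 0 ↔ ∀ j ∉ E, v j = 0 := fun v => by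
    simp [funext_iff]
  ext v
  constructor
  · rintro ⟨u, hu, rfl⟩
    refine ⟨fun h => hu (hinj (h.trans hzero.symm)), (hcoord _).2 fun j hj => ?_⟩
    exact Function.extend_apply' u (0 : ι → ℝ) j fun ⟨i, hi⟩ => hj (hi ▸ i.2)
  · rintro ⟨hv, hvE⟩
    have hext : Function.extend Subtype.val (fun j : E => v j) (0 : ι → ℝ) = v := by
      ext j
      by_cases hj : j ∈ E
      · exact Subtype.val_injective.extend_apply (fun j : E => v j) 0 ⟨j, hj⟩
      · rw [Function.extend_apply' _ _ _ fun ⟨i, hi⟩ => hj (hi ▸ i.2), (hcoord v).1 hvE j hj,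
          Pi.zero_apply]
    refine ⟨fun j => v j, fun h => hv ?_, hext⟩
    rw [← hext, show (fun j : E => v j) = 0 from h, hzero]

theorem isPreconnected_ne_zero_indicator_compl_eq_zero [Finite ι] (hE : E.ncard ≠ 1) :
    IsPreconnected {v : ι → ℝ | v ≠ 0 ∧ Eᶜ.indicator v = 0} := by
  have hcont : Continuous fun u : E → ℝ => Function.extend Subtype.val u (0 : ι → ℝ) :=
    (Function.ExtendByZero.linearMap ℝ (Subtype.val : E → ι)).continuous_of_finiteDimensional
  rw [← image_extend_compl_singleton_zero]
  refine IsPreconnected.image ?_ _ hcont.continuousOn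
  rcases E.eq_empty_or_nonempty with rfl | hne
  · exact Set.Subsingleton.isPreconnected Set.subsingleton_of_subsingleton
  · have hcard : 1 < E.ncard := lt_of_le_of_ne ((Set.ncard_pos (Set.toFinite E)).2 hne) hE.symm
    have hrank : 1 < Module.rank ℝ (E → ℝ) := by
      have := Fintype.ofFinite E
      rw [rank_fun', ← Nat.card_eq_fintype_card]
      exact_mod_cast hcard
    exact (isConnected_compl_singleton_of_one_lt_rank hrank 0).isPreconnected

variable [Fintype ι] {l v : ι → ℝ}

theorem norm_indicator_pi_le : ‖E.indicator v‖ ≤ ‖v‖ :=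
  (pi_norm_le_iff_of_nonneg (norm_nonneg v)).2 fun j =>
    (norm_indicator_le_norm_self v j).trans (norm_le_pi_norm v j)

theorem norm_indicator_mul_le : ‖E.indicator (l * v)‖ ≤ ‖l‖ * ‖E.indicator v‖ := by
  have hmul : E.indicator (l * v) = l * E.indicator v :=
    funext fun _ => E.indicator_mul_right l v
  exact hmul ▸ norm_mul_le l (E.indicator v)

theorem norm_indicator_compl_pow_mul_le (hl : ∀ j ∉ E, |l j| ≤ 1) (k : ℕ) :
    ‖Eᶜ.indicator (l ^ k * v)‖ ≤ ‖v‖ := by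
  refine (pi_norm_le_iff_of_nonneg (norm_nonneg v)).2 fun j => ?_
  by_cases hj : j ∈ E
  · simp [hj]
  · calc ‖Eᶜ.indicator (l ^ k * v) j‖ = |l j| ^ k * ‖v j‖ := by simp [hj]
      _ ≤ 1 * ‖v‖ := by
        gcongr
        · exact pow_le_one₀ (abs_nonneg _) (hl j hj)
        · exact norm_le_pi_norm v j
      _ = ‖v‖ := one_mul _

theorem exists_one_le_norm_indicator_pow_mul (hl : ∀ j ∈ E, 1 < |l j|) (hv : E.indicator v ≠ 0) :
    ∃ k : ℕ, 1 ≤ ‖E.indicator (l ^ k * v)‖ := by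
  obtain ⟨j, hj⟩ := Function.ne_iff.1 hv
  have hjE : j ∈ E := Set.mem_of_indicator_ne_zero hj
  have hvj : 0 < |v j| := by simpa [hjE] using hj
  have hgrow : Tendsto (fun k : ℕ => |l j| ^ k * |v j|) atTop atTop :=
    (tendsto_pow_atTop_atTop_of_one_lt (hl j hjE)).atTop_mul_const hvj
  obtain ⟨k, hk⟩ := (hgrow.eventually_ge_atTop 1).exists
  refine ⟨k, hk.trans ?_⟩
  simpa [hjE] using norm_le_pi_norm (E.indicator (l ^ k * v)) j

theorem exists_norm_indicator_pow_mul_mem_Icc (hl : ∀ j ∈ E, 1 < |l j|)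
    (hv : E.indicator v ≠ 0) (hv1 : ‖v‖ < 1) :
    ∃ k : ℕ, ‖E.indicator (l ^ k * v)‖ ∈ Set.Icc 1 ‖l‖ := by
  classical
  have hexit := exists_one_le_norm_indicator_pow_mul hl hv
  obtain ⟨m, hm⟩ : ∃ m, Nat.find hexit = m + 1 := by
    refine Nat.exists_eq_succ_of_ne_zero fun h0 => ?_
    have hone := Nat.find_spec hexit
    rw [h0, pow_zero, one_mul] at hone
    exact (hone.trans norm_indicator_pi_le).not_gt hv1
  have hbefore : ‖E.indicator (l ^ m * v)‖ < 1 := not_le.1 (Nat.find_min hexit (by lia))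
  refine ⟨m + 1, hm ▸ Nat.find_spec hexit, ?_⟩
  calc ‖E.indicator (l ^ (m + 1) * v)‖ = ‖E.indicator (l * (l ^ m * v))‖ := by
        rw [pow_succ', mul_assoc]
    _ ≤ ‖l‖ * ‖E.indicator (l ^ m * v)‖ := norm_indicator_mul_le
    _ ≤ ‖l‖ := mul_le_of_le_one_right (norm_nonneg l) hbefore.le

end CoordinateProjection

/-- A linearisation of `g` at the fixed point `p`: an open embedding of a coordinate space with
image a neighbourhood of `p`, which conjugates a diagonal hyperbolic linear map to `g`. The
coordinates in `E` are the expanded ones, all others are contracted. -/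
structure HyperbolicChart {ι X : Type*} [TopologicalSpace X] (g : X → X) (p : X) (E : Set ι) where
  toFun : (ι → ℝ) → X
  rate : ι → ℝ
  isOpenEmbedding : IsOpenEmbedding toFun
  map_zero : toFun 0 = p
  semiconj : Function.Semiconj toFun (rate * ·) g
  rate_ne_zero : ∀ j, rate j ≠ 0
  one_lt_abs_rate : ∀ j ∈ E, 1 < |rate j|
  abs_rate_lt_one : ∀ j ∉ E, |rate j| < 1

namespace HyperbolicChart

section General

variable {ι X : Type*} [TopologicalSpace X] {g g' : X → X} {p : X} {E : Set ι}

theorem iterate_apply (c : HyperbolicChart g p E) (k : ℕ) (v : ι → ℝ) :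
    g^[k] (c.toFun v) = c.toFun (c.rate ^ k * v) := by
  rw [← c.semiconj.iterate_right k v, mul_left_iterate]

/-- The chart of a left inverse of `g`, with the expanded and contracted coordinates swapped. -/
noncomputable def inverse (c : HyperbolicChart g p E) (h : Function.LeftInverse g' g) :
    HyperbolicChart g' p Eᶜ where
  toFun := c.toFun
  rate := c.rate⁻¹
  isOpenEmbedding := c.isOpenEmbedding
  map_zero := c.map_zero
  semiconj v := by
    have hv : c.rate * (c.rate⁻¹ * v) = v :=
      funext fun j => mul_inv_cancel_left₀ (c.rate_ne_zero j) (v j)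
    exact (h _).symm.trans (congrArg g' ((c.semiconj _).symm.trans (congrArg c.toFun hv)))
  rate_ne_zero j := inv_ne_zero (c.rate_ne_zero j)
  one_lt_abs_rate j hj := by
    rw [Pi.inv_apply, abs_inv]
    exact (one_lt_inv₀ (abs_pos.2 (c.rate_ne_zero j))).2 (c.abs_rate_lt_one j hj)
  abs_rate_lt_one j hj := by
    rw [Pi.inv_apply, abs_inv]
    exact inv_lt_one_of_one_lt₀ (c.one_lt_abs_rate j (not_not.1 hj))

/-- The chart of a positive iterate of `g`. -/
noncomputable def iterate (c : HyperbolicChart g p E) {k : ℕ} (hk : k ≠ 0) :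
    HyperbolicChart g^[k] p E where
  toFun := c.toFun
  rate := c.rate ^ k
  isOpenEmbedding := c.isOpenEmbedding
  map_zero := c.map_zero
  semiconj v := (c.iterate_apply k v).symm
  rate_ne_zero j := pow_ne_zero k (c.rate_ne_zero j)
  one_lt_abs_rate j hj := by
    rw [Pi.pow_apply, abs_pow]
    exact one_lt_pow₀ (c.one_lt_abs_rate j hj) hk
  abs_rate_lt_one j hj := by
    rw [Pi.pow_apply, abs_pow]
    exact pow_lt_one₀ (abs_nonneg _) (c.abs_rate_lt_one j hj) hk

theorem mem_basin_iff (c : HyperbolicChart g p E) {v : ι → ℝ} :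
    c.toFun v ∈ basin g p ↔ E.indicator v = 0 := by
  have horbit : c.toFun v ∈ basin g p ↔
      ∀ j, Tendsto (fun k : ℕ => c.rate j ^ k * v j) atTop (𝓝 0) := by
    have hembed := c.isOpenEmbedding.tendsto_nhds_iff (f := fun k : ℕ => c.rate ^ k * v)
      (l := atTop) (y := 0)
    rw [c.map_zero, tendsto_pi_nhds] at hembed
    simp only [basin, Set.mem_ofPred_eq, c.iterate_apply]
    exact hembed.symm
  rw [horbit]
  constructor
  · intro h
    by_contra hv
    obtain ⟨j, hj⟩ := Function.ne_iff.1 hv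
    have hjE : j ∈ E := Set.mem_of_indicator_ne_zero hj
    have hvj : 0 < |v j| := by simpa [hjE] using hj
    have hgrow : Tendsto (fun k : ℕ => |c.rate j ^ k * v j|) atTop atTop := by
      simpa only [abs_mul, abs_pow] using
        (tendsto_pow_atTop_atTop_of_one_lt (c.one_lt_abs_rate j hjE)).atTop_mul_const hvj
    exact not_tendsto_atTop_of_tendsto_nhds (h j).abs hgrow
  · intro hv j
    by_cases hj : j ∈ E
    · have hvj : v j = 0 := (Set.indicator_of_mem hj v).symm.trans (congrFun hv j)
      simp [hvj]
    · simpa using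
        (tendsto_pow_atTop_nhds_zero_of_abs_lt_one (c.abs_rate_lt_one j hj)).mul_const (v j)

theorem image_mem_nhds (c : HyperbolicChart g p E) {s : Set (ι → ℝ)} (hs : s ∈ 𝓝 0) :
    c.toFun '' s ∈ 𝓝 p := by
  simpa only [c.map_zero] using c.isOpenEmbedding.isOpenMap.image_mem_nhds hs

theorem range_mem_nhds (c : HyperbolicChart g p E) : Set.range c.toFun ∈ 𝓝 p :=
  c.isOpenEmbedding.isOpen_range.mem_nhds ⟨0, c.map_zero⟩

theorem basin_eq_image (c : HyperbolicChart g p E) (hg : Function.Injective g) :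
    basin g p = c.toFun '' {v | E.indicator v = 0} := by
  ext x
  constructor
  · intro hx
    obtain ⟨k, v, hv⟩ := (hx.eventually c.range_mem_nhds).exists
    have hinv : c.rate ^ k * (c.rate⁻¹ ^ k * v) = v := by
      rw [← mul_assoc, ← mul_pow, show c.rate * c.rate⁻¹ = 1 from
        funext fun j => mul_inv_cancel₀ (c.rate_ne_zero j), one_pow, one_mul]
    have hxv : c.toFun (c.rate⁻¹ ^ k * v) = x := by
      refine hg.iterate k ?_
      rw [c.iterate_apply, hinv, hv]
    exact ⟨_, c.mem_basin_iff.1 (hxv ▸ hx), hxv⟩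
  · rintro ⟨v, hv, rfl⟩
    exact c.mem_basin_iff.2 hv

theorem isNowhereDense_basin (c : HyperbolicChart g p E) (hg : Function.Injective g)
    (hE : E.Nonempty) : IsNowhereDense (basin g p) := by
  rw [c.basin_eq_image hg]
  exact c.isOpenEmbedding.isInducing.isNowhereDense_image
    (isNowhereDense_setOf_indicator_eq_zero hE)

theorem isAttractingPt_iff (c : HyperbolicChart g p E) (hg : Function.Injective g) :
    IsAttractingPt g p ↔ E = ∅ := by
  constructor
  · intro hp
    by_contra hE
    have hempty : interior (closure (basin g p)) = ∅ :=
      c.isNowhereDense_basin hg (Set.nonempty_iff_ne_empty.2 hE)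
    exact hempty.subset (mem_interior_iff_mem_nhds.2 (mem_of_superset hp subset_closure))
  · rintro rfl
    exact mem_of_superset c.range_mem_nhds
      (Set.range_subset_iff.2 fun v => c.mem_basin_iff.2 (Set.indicator_empty v))

end General

section Unstable

variable {ι X : Type*} [TopologicalSpace X] {p : X} {E : Set ι} {B : Set X}

theorem exists_mem_norm_indicator_mem_Icc [Fintype ι] {g : X → X} (c : HyperbolicChart g p E)
    (hmaps : Set.MapsTo g B B) (hdisj : Disjoint B (basin g p)) (hp : p ∈ closure B) {ε : ℝ}
    (hε : 0 < ε) (hε1 : ε ≤ 1) :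
    ∃ w, c.toFun w ∈ B ∧ ‖E.indicator w‖ ∈ Set.Icc 1 ‖c.rate‖ ∧ ‖Eᶜ.indicator w‖ ≤ ε := by
  obtain ⟨_, ⟨v, hv, rfl⟩, hvB⟩ :=
    mem_closure_iff_nhds.1 hp _ (c.image_mem_nhds (Metric.ball_mem_nhds 0 hε))
  rw [mem_ball_zero_iff] at hv
  have hvE : E.indicator v ≠ 0 := fun h => Set.disjoint_left.1 hdisj hvB (c.mem_basin_iff.2 h)
  obtain ⟨k, hk⟩ :=
    exists_norm_indicator_pow_mul_mem_Icc c.one_lt_abs_rate hvE (hv.trans_le hε1)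
  refine ⟨c.rate ^ k * v, c.iterate_apply k v ▸ hmaps.iterate k hvB, hk, ?_⟩
  exact (norm_indicator_compl_pow_mul_le (fun j hj => (c.abs_rate_lt_one j hj).le) k).trans hv.le

/-- Points of `B` near `p` leave along the expanded directions through a compact shell, with
arbitrarily small contracted part; a minimiser of the contracted part on the shell is the limit. -/
theorem exists_ne_zero_mem_closure [Finite ι] {g : X → X} (c : HyperbolicChart g p E)
    (hmaps : Set.MapsTo g B B) (hdisj : Disjoint B (basin g p)) (hp : p ∈ closure B) :
    ∃ v, (v ≠ 0 ∧ Eᶜ.indicator v = 0) ∧ c.toFun v ∈ closure B := by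
  cases nonempty_fintype ι
  let D : Set (ι → ℝ) :=
    closure (c.toFun ⁻¹' B) ∩ {w | 1 ≤ ‖E.indicator w‖} ∩ Metric.closedBall 0 (‖c.rate‖ + 1)
  have hDcompact : IsCompact D := by
    refine (isCompact_closedBall 0 (‖c.rate‖ + 1)).inter_left (isClosed_closure.inter ?_)
    exact isClosed_le continuous_const continuous_indicator_pi.norm
  have hDsmall : ∀ ε : ℝ, 0 < ε → ε ≤ 1 → ∃ w ∈ D, ‖Eᶜ.indicator w‖ ≤ ε := fun ε hε hε1 => by
    obtain ⟨w, hwB, ⟨hw1, hwle⟩, hwε⟩ := c.exists_mem_norm_indicator_mem_Icc hmaps hdisj hp hε hε1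
    refine ⟨w, ⟨⟨subset_closure hwB, hw1⟩, ?_⟩, hwε⟩
    rw [mem_closedBall_zero_iff, ← Set.indicator_self_add_compl E w]
    exact (norm_add_le _ _).trans (add_le_add hwle (hwε.trans hε1))
  obtain ⟨w₁, hw₁, -⟩ := hDsmall 1 one_pos le_rfl
  obtain ⟨v, ⟨⟨hvB, hv1⟩, -⟩, hmin⟩ :=
    hDcompact.exists_isMinOn ⟨w₁, hw₁⟩ (continuous_indicator_pi (E := Eᶜ)).norm.continuousOn
  refine ⟨v, ⟨?_, ?_⟩, ?_⟩
  · rintro rfl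
    exact absurd hv1 (by simp)
  · refine norm_le_zero_iff.1 (le_of_forall_gt fun ε hε => ?_)
    obtain ⟨w, hwD, hw⟩ := hDsmall (min (ε / 2) 1) (by positivity) (min_le_right _ _)
    calc ‖Eᶜ.indicator v‖ ≤ ‖Eᶜ.indicator w‖ := hmin hwD
      _ ≤ ε / 2 := hw.trans (min_le_left _ _)
      _ < ε := half_lt_self hε
  · exact map_mem_closure c.isOpenEmbedding.continuous hvB fun w hw => hw

/-- The punctured unstable set of `p` is connected, and it is covered by the closures of `A` and
`B`, both of which accumulate on it; hence these meet there. -/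
theorem exists_mem_closure_inter_closure [Finite ι] {A : Set X} {g : X ≃ₜ X}
    (c : HyperbolicChart g p E) (hE : E.ncard ≠ 1) (hA : Set.MapsTo g A A) (hB : Set.MapsTo g B B)
    (hAp : Disjoint A (basin g p)) (hBp : Disjoint B (basin g p))
    (hcover : closure A ∪ closure B = Set.univ) (hp : p ∈ closure A ∩ closure B) :
    ∃ x ∈ closure A ∩ closure B, x ≠ p ∧ x ∈ basin g.symm p := by
  have hcont := c.isOpenEmbedding.continuous
  obtain ⟨a, haU, ha⟩ := c.exists_ne_zero_mem_closure hA hAp hp.1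
  obtain ⟨b, hbU, hb⟩ := c.exists_ne_zero_mem_closure hB hBp hp.2
  obtain ⟨v, ⟨hv0, hvE⟩, hvA, hvB⟩ :=
    isPreconnected_closed_iff.1 (isPreconnected_ne_zero_indicator_compl_eq_zero hE)
      (c.toFun ⁻¹' closure A) (c.toFun ⁻¹' closure B) (isClosed_closure.preimage hcont)
      (isClosed_closure.preimage hcont) (fun v _ => hcover.symm.subset (Set.mem_univ (c.toFun v)))
      ⟨a, haU, ha⟩ ⟨b, hbU, hb⟩
  refine ⟨c.toFun v, ⟨hvA, hvB⟩, fun h => hv0 ?_, ?_⟩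
  · exact c.isOpenEmbedding.injective (h.trans c.map_zero.symm)
  · exact (c.inverse g.symm_apply_apply).mem_basin_iff.2 hvE

end Unstable

end HyperbolicChart

section GradientLike

variable {ι X : Type*} [TopologicalSpace X]

/-- There is a heteroclinic (or homoclinic) orbit of `g` from `p` to `q`. -/
def Connects (g : X ≃ₜ X) (p q : X) : Prop :=
  ∃ x, ¬ Function.IsFixedPt g x ∧ x ∈ basin g.symm p ∧ x ∈ basin g q

/-- A gradient-like homeomorphism: it has finitely many fixed points, every orbit converges in
forward and in backward time, and there is no cycle of heteroclinic orbits. -/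
structure IsGradientLike (g : X ≃ₜ X) : Prop where
  finite_fixedPoints : (Function.fixedPoints g).Finite
  exists_mem_basin : ∀ x, ∃ p, x ∈ basin g p
  exists_mem_basin_symm : ∀ x, ∃ p, x ∈ basin g.symm p
  acyclic : ∀ p, ¬ Relation.TransGen (Connects g) p p

theorem isFixedPt_symm_iff {g : X ≃ₜ X} {x : X} :
    Function.IsFixedPt g.symm x ↔ Function.IsFixedPt g x :=
  Function.IsFixedPt.equiv_symm_iff (e := g.toEquiv)

namespace IsGradientLike

theorem symm {g : X ≃ₜ X} (hg : IsGradientLike g) : IsGradientLike g.symm where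
  finite_fixedPoints := hg.finite_fixedPoints.subset fun _ => isFixedPt_symm_iff.1
  exists_mem_basin := hg.exists_mem_basin_symm
  exists_mem_basin_symm := hg.exists_mem_basin
  acyclic p hp := by
    have hswap : ∀ q r, Connects g.symm q r → Connects g r q := fun q r ⟨x, hx, hq, hr⟩ =>
      ⟨x, fun h => hx (isFixedPt_symm_iff.2 h), hr, hq⟩
    exact hg.acyclic p (Relation.transGen_swap.1 (Relation.TransGen.mono hswap _ _ hp))

theorem exists_isFixedPt_forall_mem_basin_symm [T2Space X] {g : X ≃ₜ X} (hg : IsGradientLike g)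
    {Z : Set X} (hZ : IsClosed Z) (hne : Z.Nonempty) (hmaps : Set.MapsTo g Z Z) :
    ∃ p ∈ Z, Function.IsFixedPt g p ∧ ∀ x ∈ Z, x ∈ basin g.symm p → x = p := by
  have limit_mem : ∀ x ∈ Z, ∃ q ∈ Function.fixedPoints g ∩ Z, x ∈ basin g q := fun x hx => by
    obtain ⟨q, hq⟩ := hg.exists_mem_basin x
    exact ⟨q, ⟨isFixedPt_of_mem_basin g.continuous hq, mem_of_mem_basin hZ hmaps hx hq⟩, hq⟩
  obtain ⟨x₀, hx₀⟩ := hne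
  obtain ⟨q₀, hq₀, -⟩ := limit_mem x₀ hx₀
  have : Std.Irrefl (Relation.TransGen (Connects g)) := ⟨hg.acyclic⟩
  have : IsTrans X (Relation.TransGen (Connects g)) := ⟨fun _ _ _ => Relation.TransGen.trans⟩
  have : IsStrictOrder X (Relation.TransGen (Connects g)) := {}
  have hwf := (hg.finite_fixedPoints.inter_of_left Z).wellFoundedOn
    (r := Function.swap (Relation.TransGen (Connects g)))
  -- By acyclicity some fixed point in `Z` has no heteroclinic orbit to another one in `Z`.
  obtain ⟨⟨p, hpfix, hpZ⟩, -, hmin⟩ := hwf.has_min Set.univ ⟨⟨q₀, hq₀⟩, trivial⟩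
  refine ⟨p, hpZ, hpfix, fun x hx hxp => ?_⟩
  by_contra hne
  obtain ⟨q, hqmem, hq⟩ := limit_mem x hx
  refine hmin ⟨q, hqmem⟩ trivial (.single ⟨x, fun hfix => hne ?_, hxp, hq⟩)
  exact eq_of_mem_basin (isFixedPt_symm_iff.2 hfix) hxp

theorem dense_iUnion_basin [T2Space X] [BaireSpace X] {g : X ≃ₜ X} (hg : IsGradientLike g)
    (hchart : ∀ p, Function.IsFixedPt g p → ∃ E : Set ι, Nonempty (HyperbolicChart g p E)) :
    Dense (⋃ p ∈ {p | IsAttractingPt g p}, basin g p) := by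
  have hmeagre : IsMeagre (⋃ p ∈ Function.fixedPoints g \ {p | IsAttractingPt g p}, basin g p) := by
    refine isMeagre_biUnion hg.finite_fixedPoints.sdiff.countable fun p hp => ?_
    obtain ⟨E, ⟨c⟩⟩ := hchart p hp.1
    have hE : E.Nonempty := Set.nonempty_iff_ne_empty.2 fun h =>
      hp.2 ((c.isAttractingPt_iff g.injective).2 h)
    exact (c.isNowhereDense_basin g.injective hE).isMeagre
  refine (dense_of_mem_residual hmeagre).mono fun x hx => ?_
  obtain ⟨p, hp⟩ := hg.exists_mem_basin x
  have hpfix := isFixedPt_of_mem_basin g.continuous hp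
  refine Set.mem_biUnion (by_contra fun hpattr => hx ?_) hp
  exact Set.mem_biUnion ⟨hpfix, hpattr⟩ hp

theorem not_disjoint_of_dense_union [Finite ι] [T2Space X] [PreconnectedSpace X] {g : X ≃ₜ X}
    (hg : IsGradientLike g)
    (hchart : ∀ p, Function.IsFixedPt g p →
      ∃ E : Set ι, E.ncard ≠ 1 ∧ Nonempty (HyperbolicChart g p E))
    {A B : Set X} (hAo : IsOpen A) (hBo : IsOpen B) (hA : Set.MapsTo g A A)
    (hB : Set.MapsTo g B B) (hAlim : ∀ x ∈ A, ∀ p, x ∈ basin g p → p ∈ A)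
    (hBlim : ∀ x ∈ B, ∀ p, x ∈ basin g p → p ∈ B) (hAne : A.Nonempty) (hBne : B.Nonempty)
    (hdense : Dense (A ∪ B)) : ¬ Disjoint A B := by
  intro hdisj
  have hcover : closure A ∪ closure B = Set.univ := by rw [← closure_union, hdense.closure_eq]
  have hZne : (closure A ∩ closure B).Nonempty := by
    simpa using isPreconnected_closed_iff.1 (isPreconnected_univ (α := X)) _ _ isClosed_closure
      isClosed_closure hcover.superset (by simpa using hAne.closure) (by simpa using hBne.closure)
  have hZmaps : Set.MapsTo g (closure A ∩ closure B) (closure A ∩ closure B) :=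
    (hA.closure g.continuous).inter_inter (hB.closure g.continuous)
  obtain ⟨p, hpZ, hpfix, hmin⟩ := hg.exists_isFixedPt_forall_mem_basin_symm
    (isClosed_closure.inter isClosed_closure) hZne hZmaps
  have hpA : p ∉ A := fun h => Set.disjoint_left.1 (hdisj.closure_right hAo) h hpZ.2
  have hpB : p ∉ B := fun h => Set.disjoint_left.1 (hdisj.closure_left hBo) hpZ.1 h
  obtain ⟨E, hE, ⟨c⟩⟩ := hchart p hpfix
  obtain ⟨x, hxZ, hxp, hx⟩ := c.exists_mem_closure_inter_closure hE hA hB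
    (Set.disjoint_left.2 fun x hxA hx => hpA (hAlim x hxA p hx))
    (Set.disjoint_left.2 fun x hxB hx => hpB (hBlim x hxB p hx)) hcover hpZ
  exact hxp (hmin x hxZ hx)

theorem existsUnique_isAttractingPt [Finite ι] [T2Space X] [BaireSpace X] [ConnectedSpace X]
    {g : X ≃ₜ X} (hg : IsGradientLike g)
    (hchart : ∀ p, Function.IsFixedPt g p →
      ∃ E : Set ι, E.ncard ≠ 1 ∧ Nonempty (HyperbolicChart g p E)) :
    ∃! p, IsAttractingPt g p := by
  have hdense := hg.dense_iUnion_basin fun p hp => (hchart p hp).imp fun _ h => h.2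
  obtain ⟨x, hx⟩ := hdense.nonempty
  obtain ⟨p, hp, -⟩ := Set.mem_iUnion₂.1 hx
  refine ⟨p, hp, by_contra fun hne => ?_⟩
  push Not at hne
  obtain ⟨q, hq, hqp⟩ := hne
  have hopen : ∀ r, IsAttractingPt g r → IsOpen (basin g r) :=
    fun r hr => hr.isOpen_basin g.continuous
  refine hg.not_disjoint_of_dense_union hchart (A := basin g p)
    (B := ⋃ r ∈ {r | IsAttractingPt g r ∧ r ≠ p}, basin g r) (hopen p hp)
    (isOpen_biUnion fun r hr => hopen r hr.1) mapsTo_basin ?_ ?_ ?_ ⟨p, hp.mem_basin⟩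
    ⟨q, Set.mem_biUnion ⟨hq, hqp⟩ hq.mem_basin⟩ ?_ ?_
  · exact Set.mapsTo_iUnion₂_iUnion₂ fun _ _ => mapsTo_basin
  · intro x hx r hr
    exact tendsto_nhds_unique hr hx ▸ hp.mem_basin
  · intro x hx r hr
    obtain ⟨s, hs, hxs⟩ := Set.mem_iUnion₂.1 hx
    exact tendsto_nhds_unique hr hxs ▸ Set.mem_biUnion hs hs.1.mem_basin
  · refine hdense.mono (Set.iUnion₂_subset fun r hr => ?_)
    rcases eq_or_ne r p with rfl | hrp
    · exact Set.subset_union_left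
    · exact (Set.subset_biUnion_of_mem (u := basin g)
        (show r ∈ {r | IsAttractingPt g r ∧ r ≠ p} from ⟨hr, hrp⟩)).trans Set.subset_union_right
  · exact Set.disjoint_iUnion₂_right.2 fun r hr => disjoint_basin hr.2.symm

end IsGradientLike

end GradientLike

section Convergence

variable {X : Type*} {g : X → X} {x : X} {R : Set X}

theorem exists_eventually_iterate_mem {U : X → Set X} (hU : R.PairwiseDisjoint U)
    (h : ∀ᶠ k : ℕ in atTop, g^[k] x ∈ ⋃ p ∈ R, U p ∩ g ⁻¹' U p) :
    ∃ p ∈ R, ∀ᶠ k : ℕ in atTop, g^[k] x ∈ U p := by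
  obtain ⟨K, hK⟩ := eventually_atTop.1 h
  obtain ⟨p, hp, hKp⟩ := Set.mem_iUnion₂.1 (hK K le_rfl)
  have trapped : ∀ k, K ≤ k → g^[k] x ∈ U p ∩ g ⁻¹' U p := fun k hk => by
    induction k, hk using Nat.le_induction with
    | base => exact hKp
    | succ k hk ih =>
      obtain ⟨q, hq, hkq⟩ := Set.mem_iUnion₂.1 (hK (k + 1) (by lia))
      have hkp : g^[k + 1] x ∈ U p := by
        rw [Function.iterate_succ_apply']
        exact ih.2
      exact hU.elim_set hp hq _ hkp hkq.1 ▸ hkq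
  exact ⟨p, hp, eventually_atTop.2 ⟨K, fun k hk => (trapped k hk).1⟩⟩

theorem exists_mem_basin_of_mapClusterPt [TopologicalSpace X] [T2Space X] [CompactSpace X]
    (hg : Continuous g) (hR : R.Finite) (hfix : ∀ p ∈ R, Function.IsFixedPt g p)
    (hx : ∀ y, MapClusterPt y atTop (fun k : ℕ => g^[k] x) → y ∈ R) :
    ∃ p ∈ R, x ∈ basin g p := by
  obtain ⟨U, hU, hdisj⟩ := hR.t2_separation
  have hR_nhds : ⋃ p ∈ R, U p ∩ g ⁻¹' U p ∈ 𝓝ˢ R := by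
    refine (isOpen_biUnion fun p _ => (hU p).2.inter ((hU p).2.preimage hg)).mem_nhdsSet.2 ?_
    refine fun p hp => Set.mem_biUnion hp ⟨(hU p).1, ?_⟩
    rw [Set.mem_preimage, hfix p hp]
    exact (hU p).1
  obtain ⟨p, hp, hxp⟩ := exists_eventually_iterate_mem hdisj
    (isCompact_univ.tendsto_nhdsSet_of_mapClusterPt (by simp) (fun y _ => hx y) hR_nhds)
  refine ⟨p, hp, isCompact_univ.tendsto_nhds_of_unique_mapClusterPt (by simp) fun y _ hy => ?_⟩
  obtain ⟨k, hky, hkp⟩ :=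
    ((hy.frequently ((hU y).2.mem_nhds (hU y).1)).and_eventually hxp).exists
  exact hdisj.elim_set (hx y hy) hp _ hky hkp

end Convergence

section ChainRecurrence

variable {X : Type*} [PseudoMetricSpace X]

/-- One step of an `ε`-chain of `f`: from `x` follow the orbit for a positive time, then jump by
less than `ε` to `y`. -/
def EpsStep (f : X → X) (ε : ℝ) (x y : X) : Prop :=
  ∃ m : ℕ, 1 ≤ m ∧ dist (f^[m] x) y < ε

/-- For every `ε > 0` there is an `ε`-chain of `f` from `x` to `y`. -/
def ChainReachable (f : X → X) (x y : X) : Prop :=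
  ∀ ε : ℝ, 0 < ε → Relation.TransGen (EpsStep f ε) x y

/-- The point `y` is non-wandering for `f`: every neighbourhood of `y` contains a point which
returns to it after a positive time. -/
def IsNonwandering (f : X → X) (y : X) : Prop :=
  ∀ U ∈ 𝓝 y, ∃ z ∈ U, ∃ m : ℕ, 1 ≤ m ∧ f^[m] z ∈ U

theorem isEpsChain_of_transGen {f : X → X} {ε : ℝ} {x y : X}
    (h : Relation.TransGen (EpsStep f ε) x y) : IsEpsChain f ε x y := by
  induction h using Relation.TransGen.head_induction_on with
  | @single x h =>
    obtain ⟨m, hm, hdist⟩ := h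
    exact ⟨1, one_pos, ![x, y], fun _ => m, rfl, rfl, fun _ => hm, by simpa using hdist⟩
  | @head x _ h _ ih =>
    obtain ⟨m, hm, hdist⟩ := h
    obtain ⟨k, -, c, l, hfirst, hlast, hl, hstep⟩ := ih
    refine ⟨k + 1, k.succ_pos, Fin.cons x c, Fin.cons m l, rfl, ?_, ?_, ?_⟩
    · rw [← Fin.succ_last, Fin.cons_succ, hlast]
    · exact Fin.cases (by simpa using hm) (by simpa using hl)
    · refine Fin.cases (by simpa [hfirst] using hdist) fun j => ?_
      rw [← Fin.succ_castSucc]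
      simpa using hstep j

theorem ChainReachable.mem_chainRecurrentSet {f : X → X} {x : X} (h : ChainReachable f x x) :
    x ∈ chainRecurrentSet f :=
  fun ε hε => isEpsChain_of_transGen (h ε hε)

theorem ChainReachable.trans {f : X → X} {x y z : X} (hxy : ChainReachable f x y)
    (hyz : ChainReachable f y z) : ChainReachable f x z :=
  fun ε hε => (hxy ε hε).trans (hyz ε hε)

theorem mem_chainRecurrentSet_of_mem_periodicPts {f : X → X} {x : X}
    (hx : x ∈ Function.periodicPts f) : x ∈ chainRecurrentSet f := by
  obtain ⟨m, hm, hper⟩ := hx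
  refine ChainReachable.mem_chainRecurrentSet fun ε hε => .single ⟨m, hm, ?_⟩
  rwa [hper.eq, dist_self]

theorem IsNonwandering.mem_chainRecurrentSet {f : X → X} {y : X} (hf : Continuous f)
    (hy : IsNonwandering f y) : y ∈ chainRecurrentSet f := by
  refine ChainReachable.mem_chainRecurrentSet fun ε hε => ?_
  have hball : Metric.ball y (ε / 2) ∩ f ⁻¹' Metric.ball (f y) (ε / 2) ∈ 𝓝 y :=
    inter_mem (Metric.ball_mem_nhds y (half_pos hε))
      (hf.continuousAt.preimage_mem_nhds (Metric.ball_mem_nhds (f y) (half_pos hε)))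
  obtain ⟨z, ⟨-, hfz⟩, m, hm, hreturn, -⟩ := hy _ hball
  rw [Set.mem_preimage, Metric.mem_ball'] at hfz
  rw [Metric.mem_ball] at hreturn
  -- Jump from `y` to `f z`; if `z` returns after one step, no time is left for a second jump.
  rcases hm.eq_or_lt with rfl | hm
  · refine .single ⟨1, le_rfl, (dist_triangle _ (f z) _).trans_lt ?_⟩
    exact (add_lt_add hfz hreturn).trans_eq (add_halves ε)
  · refine .head (b := f z) ⟨1, le_rfl, hfz.trans (half_lt_self hε)⟩
      (.single ⟨m - 1, by lia, ?_⟩)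
    rw [← Function.iterate_succ_apply, Nat.succ_eq_add_one, Nat.sub_add_cancel (by lia)]
    exact hreturn.trans (half_lt_self hε)

theorem isNonwandering_of_mapClusterPt {f : X → X} {x y : X}
    (hy : MapClusterPt y atTop fun k : ℕ => f^[k] x) : IsNonwandering f y := by
  intro U hU
  have hfreq := frequently_atTop.1 (hy.frequently hU)
  obtain ⟨k, -, hk⟩ := hfreq 0
  obtain ⟨l, hkl, hl⟩ := hfreq (k + 1)
  refine ⟨f^[k] x, hk, l - k, by lia, ?_⟩
  rwa [← Function.iterate_add_apply, Nat.sub_add_cancel (by lia)]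

theorem IsNonwandering.of_leftInverse {f f' : X → X} {y : X} (hff' : Function.LeftInverse f f')
    (hy : IsNonwandering f' y) : IsNonwandering f y := by
  intro U hU
  obtain ⟨z, hz, m, hm, hreturn⟩ := hy U hU
  exact ⟨f'^[m] z, hreturn, m, hm, (hff'.iterate m z).symm ▸ hz⟩

theorem chainReachable_of_mapClusterPt {f : X → X} {x y : X}
    (hy : MapClusterPt y atTop fun k : ℕ => f^[k] x) : ChainReachable f x y := by
  intro ε hε
  obtain ⟨k, hk, hdist⟩ := frequently_atTop.1 (hy.frequently (Metric.ball_mem_nhds y hε)) 1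
  exact .single ⟨k, hk, hdist⟩

theorem chainReachable_of_mapClusterPt_leftInverse {f f' : X → X} {x y : X} (hf : Continuous f)
    (hff' : Function.LeftInverse f f') (hy : MapClusterPt y atTop fun k : ℕ => f'^[k] x) :
    ChainReachable f y x := by
  intro ε hε
  obtain ⟨k, hk, hdist⟩ := frequently_atTop.1 (hy.frequently
    (hf.continuousAt.preimage_mem_nhds (Metric.ball_mem_nhds (f y) hε))) 2
  obtain ⟨l, rfl⟩ : ∃ l, k = l + 1 := ⟨k - 1, by lia⟩
  rw [Function.iterate_succ_apply', hff', Metric.mem_ball'] at hdist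
  refine .head ⟨1, le_rfl, hdist⟩ (.single ⟨l, by lia, ?_⟩)
  rwa [hff'.iterate l, dist_self]

end ChainRecurrence

section Iterate

theorem exists_isPeriodicPt_of_finite {X : Type*} {f : X → X} {R : Set X} (hR : R.Finite)
    (hper : R ⊆ Function.periodicPts f) : ∃ N ≠ 0, ∀ p ∈ R, Function.IsPeriodicPt f N p := by
  refine ⟨∏ p ∈ hR.toFinset, Function.minimalPeriod f p, ?_, fun p hp => ?_⟩
  · refine Finset.prod_ne_zero_iff.2 fun p hp => ?_
    exact (Function.minimalPeriod_pos_of_mem_periodicPts (hper (hR.mem_toFinset.1 hp))).ne'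
  · exact Function.isPeriodicPt_iff_minimalPeriod_dvd.2
      (Finset.dvd_prod_of_mem _ (hR.mem_toFinset.2 hp))

theorem coe_homeomorph_pow {X : Type*} [TopologicalSpace X] (f : X ≃ₜ X) (N : ℕ) :
    ⇑(f ^ N) = f^[N] :=
  hom_coe_pow (fun e : X ≃ₜ X => ⇑e) rfl (fun _ _ => rfl) f N

theorem mapClusterPt_of_iterate {X : Type*} [TopologicalSpace X] {f : X → X} {N : ℕ} {x y : X}
    (hN : N ≠ 0) (hy : MapClusterPt y atTop fun k : ℕ => (f^[N])^[k] x) :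
    MapClusterPt y atTop fun k : ℕ => f^[k] x := by
  simp only [← Function.iterate_mul] at hy
  exact MapClusterPt.of_comp (tendsto_id.const_mul_atTop' (Nat.pos_of_ne_zero hN)) hy

variable {X : Type*} [MetricSpace X] {f : X ≃ₜ X} {N : ℕ}

theorem fixedPoints_pow_eq (hN : N ≠ 0)
    (hper : ∀ p ∈ chainRecurrentSet f, Function.IsPeriodicPt f N p) :
    Function.fixedPoints (f ^ N) = chainRecurrentSet f := by
  rw [coe_homeomorph_pow]
  exact Set.Subset.antisymm (fun p hp => mem_chainRecurrentSet_of_mem_periodicPts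
    ⟨N, Nat.pos_of_ne_zero hN, hp⟩) hper

theorem exists_chainReachable_of_transGen_connects {p q : X} (hN : N ≠ 0)
    (h : Relation.TransGen (Connects (f ^ N)) p q) :
    ∃ x, ¬ Function.IsFixedPt (f ^ N) x ∧ ChainReachable f p x ∧ ChainReachable f x q := by
  have of_connects : ∀ p q, Connects (f ^ N) p q →
      ∃ x, ¬ Function.IsFixedPt (f ^ N) x ∧ ChainReachable f p x ∧ ChainReachable f x q := by
    rintro p q ⟨x, hx, hxp, hxq⟩
    have hp := hxp.mapClusterPt
    have hq := hxq.mapClusterPt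
    rw [coe_homeomorph_pow] at hq
    rw [show (f ^ N).symm = f.symm ^ N from (inv_pow f N).symm, coe_homeomorph_pow] at hp
    exact ⟨x, hx, chainReachable_of_mapClusterPt_leftInverse f.continuous f.apply_symm_apply
      (mapClusterPt_of_iterate hN hp),
      chainReachable_of_mapClusterPt (mapClusterPt_of_iterate hN hq)⟩
  induction h with
  | single h => exact of_connects _ _ h
  | tail _ h ih =>
    obtain ⟨x, hx, hpx, hxq⟩ := ih
    obtain ⟨y, -, hqy, hyr⟩ := of_connects _ _ h
    exact ⟨x, hx, hpx, hxq.trans (hqy.trans hyr)⟩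

theorem isGradientLike_pow [CompactSpace X] (hfin : (chainRecurrentSet f).Finite) (hN : N ≠ 0)
    (hper : ∀ p ∈ chainRecurrentSet f, Function.IsPeriodicPt f N p) :
    IsGradientLike (f ^ N) := by
  have hfix := fixedPoints_pow_eq hN hper
  have hsymm : (f ^ N).symm = f.symm ^ N := (inv_pow f N).symm
  refine ⟨hfix ▸ hfin, fun x => ?_, fun x => ?_, fun p hp => ?_⟩
  · obtain ⟨p, -, hp⟩ := exists_mem_basin_of_mapClusterPt (x := x) (f ^ N).continuous hfin hfix.ge
      fun y hy => by
        rw [coe_homeomorph_pow] at hy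
        exact (isNonwandering_of_mapClusterPt
          (mapClusterPt_of_iterate hN hy)).mem_chainRecurrentSet f.continuous
    exact ⟨p, hp⟩
  · obtain ⟨p, -, hp⟩ := exists_mem_basin_of_mapClusterPt (x := x) (f ^ N).symm.continuous hfin
      (fun p hp => isFixedPt_symm_iff.2 (hfix.ge hp)) fun y hy => by
        rw [hsymm, coe_homeomorph_pow] at hy
        exact ((isNonwandering_of_mapClusterPt (mapClusterPt_of_iterate hN hy)).of_leftInverse
          f.apply_symm_apply).mem_chainRecurrentSet f.continuous
    exact ⟨p, hp⟩
  · obtain ⟨x, hx, hpx, hxp⟩ := exists_chainReachable_of_transGen_connects hN hp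
    exact hx (hfix.ge (hxp.trans hpx).mem_chainRecurrentSet)

end Iterate

section MorseIndex

/-- The diagonal entries of the model map `a_{i,δu,δs}`. -/
noncomputable def modelRate (n i : ℕ) (δu δs : ℝ) : Fin n → ℝ := fun j =>
  if (j : ℕ) < i then (if (j : ℕ) = 0 then 2 * δu else 2)
  else (if (j : ℕ) = i then δs / 2 else 1 / 2)

theorem modelMap_apply {n i : ℕ} {δu δs : ℝ} (x : EuclideanSpace ℝ (Fin n)) (j : Fin n) :
    modelMap n i δu δs x j = modelRate n i δu δs j * x j := by
  simp only [modelMap, modelRate]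
  split_ifs <;> rfl

theorem abs_modelRate_of_lt {n i : ℕ} {δu δs : ℝ} (hδu : δu = 1 ∨ δu = -1) {j : Fin n}
    (hj : (j : ℕ) < i) : |modelRate n i δu δs j| = 2 := by
  rw [modelRate, if_pos hj]
  rcases hδu with rfl | rfl <;> split_ifs <;> norm_num

theorem abs_modelRate_of_not_lt {n i : ℕ} {δu δs : ℝ} (hδs : δs = 1 ∨ δs = -1) {j : Fin n}
    (hj : ¬ (j : ℕ) < i) : |modelRate n i δu δs j| = 1 / 2 := by
  rw [modelRate, if_neg hj]
  rcases hδs with rfl | rfl <;> split_ifs <;> norm_num [abs_div]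

theorem ncard_setOf_val_lt {n i : ℕ} (hi : i ≤ n) : {j : Fin n | (j : ℕ) < i}.ncard = i := by
  rw [Set.ncard_eq_toFinset_card', Set.toFinset_ofPred, Fin.card_filter_val_lt, min_eq_right hi]

theorem ncard_compl_setOf_val_lt {n i : ℕ} (hi : i ≤ n) :
    {j : Fin n | (j : ℕ) < i}ᶜ.ncard = n - i := by
  rw [Set.ncard_compl, ncard_setOf_val_lt hi, Nat.card_fin]

variable {n : ℕ} {M : Type*} [MetricSpace M] {f : M ≃ₜ M}

namespace TopHyperbolic

variable {i : ℕ} {p : M}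

theorem mem_periodicPts (h : TopHyperbolic n f p i) : p ∈ Function.periodicPts f := by
  obtain ⟨m, hm, hper, -⟩ := h
  exact ⟨m, hm, hper⟩

theorem nonempty_hyperbolicChart (h : TopHyperbolic n f p i) :
    Nonempty (HyperbolicChart f^[Function.minimalPeriod f p] p {j : Fin n | (j : ℕ) < i}) := by
  obtain ⟨m, -, hper, hm, δu, δs, hδu, hδs, U, hU, hpU, φ, hφ⟩ := h
  rw [hm]
  have hexp (j : Fin n) (hj : (j : ℕ) < i) := abs_modelRate_of_lt (δs := δs) hδu hj
  have hcon (j : Fin n) (hj : ¬ (j : ℕ) < i) := abs_modelRate_of_not_lt (δu := δu) hδs hj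
  have hne : ∀ j, |modelRate n i δu δs j| ≠ 0 ∧ |modelRate n i δu δs j| ≠ 1 := fun j => by
    by_cases hj : (j : ℕ) < i
    · norm_num [hexp j hj]
    · norm_num [hcon j hj]
  have hcenter : φ ⟨p, hpU⟩ = 0 := by
    have hfix : modelMap n i δu δs (φ ⟨p, hpU⟩) = φ ⟨p, hpU⟩ :=
      φ.symm.injective (Subtype.ext ((hφ ⟨p, hpU⟩).symm.trans (by simpa using hper.eq)))
    ext j
    have hj := (modelMap_apply (φ ⟨p, hpU⟩) j).symm.trans (congrArg (fun y => y j) hfix)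
    by_contra hj0
    exact (hne j).2 (by rw [(mul_eq_right₀ hj0).1 hj, abs_one])
  let e := (EuclideanSpace.equiv (Fin n) ℝ).toHomeomorph
  exact ⟨{
    toFun := fun v => φ.symm (e.symm v)
    rate := modelRate n i δu δs
    isOpenEmbedding :=
      hU.isOpenEmbedding_subtypeVal.comp (e.symm.trans φ.symm).isOpenEmbedding
    map_zero := congrArg Subtype.val (φ.symm_apply_eq.2 hcenter.symm)
    semiconj := fun v => by
      rw [hφ, φ.apply_symm_apply]
      congr 2
      ext j
      exact (modelMap_apply (e.symm v) j).symm
    rate_ne_zero := fun j => abs_ne_zero.1 (hne j).1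
    one_lt_abs_rate := fun j hj => by norm_num [hexp j hj]
    abs_rate_lt_one := fun j hj => by norm_num [hcon j hj] }⟩

theorem nonempty_hyperbolicChart_pow (h : TopHyperbolic n f p i) {N : ℕ} (hN : N ≠ 0)
    (hper : Function.IsPeriodicPt f N p) :
    Nonempty (HyperbolicChart (f ^ N) p {j : Fin n | (j : ℕ) < i}) := by
  obtain ⟨c⟩ := h.nonempty_hyperbolicChart
  obtain ⟨k, rfl⟩ := Function.isPeriodicPt_iff_minimalPeriod_dvd.1 hper
  rw [coe_homeomorph_pow, Function.iterate_mul]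
  exact ⟨c.iterate (right_ne_zero_of_mul hN)⟩

end TopHyperbolic

namespace RegularHomeo

theorem exists_ne_zero_isPeriodicPt (hf : RegularHomeo n f) :
    ∃ N ≠ 0, ∀ p ∈ chainRecurrentSet f, Function.IsPeriodicPt f N p :=
  exists_isPeriodicPt_of_finite hf.1 fun p hp =>
    let ⟨_, _, h⟩ := hf.2 p hp
    h.mem_periodicPts

theorem existsUnique_of_hyperbolicChart [CompactSpace M] [ConnectedSpace M]
    (hf : RegularHomeo n f) {g : M ≃ₜ M} (hg : IsGradientLike g) (hfg : Function.Commute f g)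
    (hfix : Function.fixedPoints g = chainRecurrentSet f) {E : ℕ → Set (Fin n)}
    (hchart : ∀ p ∈ chainRecurrentSet f, ∀ i, TopHyperbolic n f p i →
      Nonempty (HyperbolicChart g p (E i)))
    (hcard : ∀ p ∈ chainRecurrentSet f, ∀ i ≤ n, TopHyperbolic n f p i → (E i).ncard ≠ 1)
    {i₀ : ℕ} (hi₀ : i₀ ≤ n) (hempty : ∀ i ≤ n, E i = ∅ ↔ i = i₀) :
    ∃ ω, ω ∈ chainRecurrentSet f ∧ TopHyperbolic n f ω i₀ ∧ f ω = ω ∧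
      ∀ ω' ∈ chainRecurrentSet f, TopHyperbolic n f ω' i₀ → ω' = ω := by
  have attracting_iff : ∀ p ∈ chainRecurrentSet f, ∀ i ≤ n, TopHyperbolic n f p i →
      (IsAttractingPt g p ↔ i = i₀) := fun p hp i hi h => by
    obtain ⟨c⟩ := hchart p hp i h
    exact (c.isAttractingPt_iff g.injective).trans (hempty i hi)
  obtain ⟨ω, hω, hunique⟩ := hg.existsUnique_isAttractingPt fun p hp => by
    have hpR := hfix.le hp
    obtain ⟨i, hi, h⟩ := hf.2 p hpR
    exact ⟨E i, hcard p hpR i hi h, hchart p hpR i h⟩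
  have hωR : ω ∈ chainRecurrentSet f := hfix.le (hω.isFixedPt g.continuous)
  refine ⟨ω, hωR, ?_, hunique _ (hω.map_of_commute hfg), fun ω' hω' h =>
    hunique ω' ((attracting_iff ω' hω' i₀ hi₀ h).2 rfl)⟩
  obtain ⟨i, hi, h⟩ := hf.2 ω hωR
  exact (attracting_iff ω hωR i hi h).1 hω ▸ h

theorem existsUnique_sink [CompactSpace M] [ConnectedSpace M] (hf : RegularHomeo n f)
    (hind : ∀ p ∈ chainRecurrentSet f, ∀ i, TopHyperbolic n f p i → i ≠ 1) :
    ∃ ω, ω ∈ chainRecurrentSet f ∧ TopHyperbolic n f ω 0 ∧ f ω = ω ∧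
      ∀ ω' ∈ chainRecurrentSet f, TopHyperbolic n f ω' 0 → ω' = ω := by
  obtain ⟨N, hN, hper⟩ := hf.exists_ne_zero_isPeriodicPt
  refine hf.existsUnique_of_hyperbolicChart (isGradientLike_pow hf.1 hN hper)
    (fun x => DFunLike.congr_fun (Commute.self_pow f N).eq x) (fixedPoints_pow_eq hN hper)
    (fun p hp _ h => h.nonempty_hyperbolicChart_pow hN (hper p hp)) ?_ n.zero_le ?_
  · intro p hp i hi h
    rw [ncard_setOf_val_lt hi]
    exact hind p hp i h
  · intro i hi
    rw [← Set.ncard_eq_zero, ncard_setOf_val_lt hi]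

theorem existsUnique_source [CompactSpace M] [ConnectedSpace M] (hf : RegularHomeo n f)
    (hind : ∀ p ∈ chainRecurrentSet f, ∀ i, TopHyperbolic n f p i → i ≠ n - 1) :
    ∃ α, α ∈ chainRecurrentSet f ∧ TopHyperbolic n f α n ∧ f α = α ∧
      ∀ α' ∈ chainRecurrentSet f, TopHyperbolic n f α' n → α' = α := by
  obtain ⟨N, hN, hper⟩ := hf.exists_ne_zero_isPeriodicPt
  have hfix : Function.fixedPoints (f ^ N).symm = chainRecurrentSet f :=
    (Set.ext fun _ => isFixedPt_symm_iff).trans (fixedPoints_pow_eq hN hper)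
  refine hf.existsUnique_of_hyperbolicChart (isGradientLike_pow hf.1 hN hper).symm
    (fun x => DFunLike.congr_fun (Commute.self_pow f N).inv_right.eq x) hfix
    (fun p hp _ h => (h.nonempty_hyperbolicChart_pow hN (hper p hp)).map fun c =>
      c.inverse (f ^ N).symm_apply_apply) ?_ le_rfl ?_
  · intro p hp i hi h
    rw [ncard_compl_setOf_val_lt hi]
    have := hind p hp i h
    lia
  · intro i hi
    rw [← Set.ncard_eq_zero, ncard_compl_setOf_val_lt hi]
    lia

end RegularHomeo

end MorseIndex

/-- a regular homeomorphism of a closed connected topological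
`n`-manifold (`n ≥ 2`) with no chain recurrent points of Morse index `1` or `n-1`
is polar: it has exactly one sink and exactly one source, both fixed points. -/
theorem regular_no_codim_one_is_polar {n : ℕ} (hn : 2 ≤ n) {M : Type*}
    [MetricSpace M] [CompactSpace M] [ConnectedSpace M] [Nonempty M]
    (hM : IsChartedEuclidean n M)
    (f : M ≃ₜ M) (hf : RegularHomeo n f)
    (hind : ∀ p ∈ chainRecurrentSet (⇑f), ∀ i : ℕ,
      TopHyperbolic n f p i → i ≠ 1 ∧ i ≠ n - 1) :
    (∃ ω : M, ω ∈ chainRecurrentSet (⇑f) ∧ TopHyperbolic n f ω 0 ∧ f ω = ω ∧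
      ∀ ω' ∈ chainRecurrentSet (⇑f), TopHyperbolic n f ω' 0 → ω' = ω) ∧
    (∃ α : M, α ∈ chainRecurrentSet (⇑f) ∧ TopHyperbolic n f α n ∧ f α = α ∧
      ∀ α' ∈ chainRecurrentSet (⇑f), TopHyperbolic n f α' n → α' = α) :=
  ⟨hf.existsUnique_sink fun p hp i h => (hind p hp i h).1,
    hf.existsUnique_source fun p hp i h => (hind p hp i h).2⟩
end

section
/- Let n ≥ 2, let M be a closed connected topological n-manifold, and let f : M → M be a regular homeomorphism such that no point of its chain recurrent set has Morse index 1 or n−1 and f has no heteroclinic intersections (W^u_p ∩ W^s_q = ∅ for every pair of distinct saddle periodic points p, q). Then M is homeomorphic to the n-sphere Sⁿ if and only if f has no saddle periodic points. -/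
open Filter Topology

/-!
A power `g` of `f` fixes every chain recurrent point, and since limit points are chain recurrent
every `g`-orbit converges to one of these points.

Without saddles, the unstable manifold of a source, minus the source, is connected and covered by
the disjoint open basins of the sinks, hence lies in a single basin. So every point has a punctured
neighbourhood contained in one basin; as `M` is connected there is one sink, and dually one source.
The basin of the sink is a copy of `ℝⁿ` whose complement is the source, so `M` is the one-point
compactification of `ℝⁿ`.

Conversely, let `p` be a saddle on `M ≃ₜ Sⁿ`. Its unstable and stable subspaces have dimension at
least `2`, so in the absence of heteroclinic intersections the same connectedness argument gives a
sink `ω` with `W^u_p ∖ {p}` in its basin and, dually, a source `α`. In a chart `Φ` around `p` with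
values in `M ∖ {α} ≃ₜ ℝⁿ`, the manifold `W^u_p` closes up at `c = Φ ω` while `W^s_p` is properly
embedded and avoids `c`. Let `P` and `Q` be the orthogonal projections onto the two subspaces and
consider `z ↦ Φ (P z) - Φ (Q z)` on small spheres, as a map into `ℝⁿ ∖ {0}`. Enlarging the sphere,
moving the first term to `c` and contracting the second shows that it is null-homotopic. Folding
the second term into the first turns it into `z ↦ Φ (P z - Q z) - Φ 0`, which is essential because
`Φ` is a local homeomorphism and the identity of a sphere is essential: a contradiction.

That the identity of a sphere is essential is proved by the Milnor–Rogers argument: for a `C¹` map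
`k` vanishing on a sphere, the integral of `det (1 + t • k')` over the ball is a polynomial in `t`
which for small `t` is the volume of the ball.
-/

/-! ### The Milnor–Rogers argument -/

section VolumeOfPerturbedBall
open MeasureTheory Metric
open scoped Polynomial

lemma exists_polynomial_det_one_add_smul {K V : Type*} [Field K] [AddCommGroup V] [Module K V]
    [FiniteDimensional K V] (A : V →ₗ[K] V) :
    ∃ P : K[X], P.natDegree ≤ Module.finrank K V ∧
      ∀ t : K, LinearMap.det (1 + t • A) = P.eval t := by
  classical
  let b := Module.finBasis K V
  let N := LinearMap.toMatrix b b A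
  let ι := Fin (Module.finrank K V)
  refine ⟨((Polynomial.X : K[X]) • N.map Polynomial.C +
    (1 : Matrix ι ι K).map Polynomial.C).det, ?_, fun t => ?_⟩
  · simpa using Polynomial.natDegree_det_X_add_C_le N 1
  · rw [← LinearMap.det_toMatrix b, ← Polynomial.coe_evalRingHom, RingHom.map_det]
    congr 1
    ext i j
    by_cases hij : i = j <;> simp [N, hij, LinearMap.toMatrix_one, mul_comm t, add_comm]

variable {E : Type*} [NormedAddCommGroup E]

lemma bijective_add_of_lipschitzWith [CompleteSpace E] {L : NNReal} (hL : L < 1) {k : E → E}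
    (hk : LipschitzWith L k) : Function.Bijective fun x => x + k x := by
  constructor
  · exact (AntilipschitzWith.id.add_lipschitzWith hk (by simpa using hL)).injective
  · intro y
    have hcontr : ContractingWith L fun x => y - k x :=
      ⟨hL, by simpa using (LipschitzWith.const y).sub hk⟩
    refine ⟨hcontr.fixedPoint _, ?_⟩
    have hfix : y - k (hcontr.fixedPoint _) = hcontr.fixedPoint _ := hcontr.fixedPoint_isFixedPt
    exact (sub_eq_iff_eq_add.1 hfix).symm

lemma bijOn_add_of_lipschitzWith [CompleteSpace E] {L : NNReal} (hL : L < 1) {k : E → E}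
    (hk : LipschitzWith L k) {s : Set E} (h0 : ∀ x ∉ s, k x = 0) :
    Set.BijOn (fun x => x + k x) s s := by
  obtain ⟨hinj, hsurj⟩ := bijective_add_of_lipschitzWith hL hk
  have hfix {x : E} (hx : x ∉ s) : x + k x = x := by rw [h0 x hx, add_zero]
  refine ⟨fun x hx => ?_, hinj.injOn, fun y hy => ?_⟩
  · by_contra hout
    have heq : x + k x = x := hinj (hfix hout)
    exact hout (by simpa only [heq] using hx)
  · obtain ⟨x, rfl⟩ := hsurj y
    refine ⟨x, ?_, rfl⟩
    by_contra hx
    exact hx (by simpa only [hfix hx] using hy)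

variable [NormedSpace ℝ E]

lemma det_one_add_ne_zero_of_norm_lt_one [FiniteDimensional ℝ E] {A : E →L[ℝ] E} (hA : ‖A‖ < 1) :
    (1 + A).det ≠ 0 := by
  have := FiniteDimensional.complete ℝ E
  have hunit : IsUnit (1 + A) := by
    simpa only [sub_neg_eq_add] using isUnit_one_sub_of_norm_lt_one (x := -A) (by rwa [norm_neg])
  exact (LinearMap.isUnit_det _ (hunit.map ContinuousLinearMap.toLinearMapRingHom)).ne_zero

lemma det_one_add_pos_of_norm_lt_one [FiniteDimensional ℝ E] {A : E →L[ℝ] E} (hA : ‖A‖ < 1) :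
    0 < (1 + A).det := by
  by_contra! hneg
  have hcont : Continuous fun B : E →L[ℝ] E => (1 + B).det :=
    ContinuousLinearMap.continuous_det.comp (continuous_const.add continuous_id)
  obtain ⟨B, hB, hdet⟩ := (convex_ball (0 : E →L[ℝ] E) 1).isPreconnected.intermediate_value
    (mem_ball_zero_iff.2 hA) (mem_ball_self one_pos) hcont.continuousOn
    ⟨hneg, by simp [ContinuousLinearMap.det]⟩
  exact det_one_add_ne_zero_of_norm_lt_one (mem_ball_zero_iff.1 hB) hdet

lemma integral_eval_eq_const_of_infinite {α : Type*} [MeasurableSpace α] {μ : Measure α} {n : ℕ}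
    {P : α → ℝ[X]} (hdeg : ∀ x, (P x).natDegree ≤ n) {T : Set ℝ} (hT : T.Infinite)
    {c : ℝ} (hint : ∀ t ∈ T, Integrable (fun x => (P x).eval t) μ)
    (hc : ∀ t ∈ T, ∫ x, (P x).eval t ∂μ = c) (t : ℝ) : ∫ x, (P x).eval t ∂μ = c := by
  obtain ⟨s, hsT, hcard⟩ := hT.exists_subset_card_eq (n + 1)
  have hid : Set.InjOn (id : ℝ → ℝ) s := Set.injOn_id _
  have heval (x : α) :
      (P x).eval t = ∑ u ∈ s, (P x).eval u * (Lagrange.basis s id u).eval t := by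
    have hlt : (P x).degree < (s.card : WithBot ℕ) :=
      Polynomial.degree_le_natDegree.trans_lt (by exact_mod_cast (hdeg x).trans_lt (by lia))
    conv_lhs => rw [Lagrange.eq_interpolate hid hlt]
    simp [Lagrange.interpolate_apply, Polynomial.eval_finsetSum]
  have hsum : ∑ u ∈ s, (Lagrange.basis s id u).eval t = 1 := by
    have hne : s.Nonempty := Finset.card_pos.1 (by lia)
    rw [← Polynomial.eval_finsetSum, Lagrange.sum_basis hid hne, Polynomial.eval_one]
  calc ∫ x, (P x).eval t ∂μ
      = ∑ u ∈ s, (∫ x, (P x).eval u ∂μ) * (Lagrange.basis s id u).eval t := by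
        simp_rw [heval, ← integral_mul_const]
        exact integral_finsetSum _ fun u hu => (hint u (hsT hu)).mul_const _
    _ = ∑ u ∈ s, c * (Lagrange.basis s id u).eval t :=
        Finset.sum_congr rfl fun u hu => by rw [hc u (hsT hu)]
    _ = c := by rw [← Finset.mul_sum, hsum, mul_one]

lemma exists_mem_frontier_dist_le {s : Set E} {x y : E} (hx : x ∈ s) (hy : y ∉ s) :
    ∃ z ∈ frontier s, dist x z ≤ dist x y := by
  have hpre : IsPreconnected (segment ℝ x y) := (convex_segment x y).isPreconnected
  obtain ⟨z, hz, hzs⟩ : (segment ℝ x y ∩ frontier s).Nonempty := by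
    by_contra! hempty
    have hdisj : Disjoint (segment ℝ x y) (frontier s) := Set.disjoint_iff_inter_eq_empty.2 hempty
    have hcover : segment ℝ x y ⊆ interior s ∪ (closure s)ᶜ := fun w hw => by
      by_cases hwi : w ∈ interior s
      · exact Or.inl hwi
      · exact Or.inr fun hwc => hdisj.notMem_of_mem_left hw ⟨hwc, hwi⟩
    have hinside : segment ℝ x y ⊆ interior s := by
      refine hpre.subset_left_of_subset_union isOpen_interior isClosed_closure.isOpen_compl
        (disjoint_compl_right.mono_left (interior_subset.trans subset_closure)) hcover
        ⟨x, left_mem_segment ℝ x y, ?_⟩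
      exact (hcover (left_mem_segment ℝ x y)).resolve_right fun h => h (subset_closure hx)
    exact hy (interior_subset (hinside (right_mem_segment ℝ x y)))
  refine ⟨z, hzs, ?_⟩
  linarith [dist_add_dist_of_mem_segment hz, dist_nonneg (x := z) (y := y)]

lemma lipschitzWith_indicator {F : Type*} [NormedAddCommGroup F] {s : Set E} (hs : IsClosed s)
    {L : NNReal} {k : E → F} (hk : LipschitzOnWith L k s) (h0 : ∀ x ∈ frontier s, k x = 0) :
    LipschitzWith L (s.indicator k) := by
  have hmixed {x y : E} (hx : x ∈ s) (hy : y ∉ s) : ‖k x‖ ≤ L * dist x y := by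
    obtain ⟨z, hz, hdist⟩ := exists_mem_frontier_dist_le hx hy
    calc ‖k x‖ = dist (k x) (k z) := by rw [h0 z hz, dist_zero_right]
      _ ≤ L * dist x z := hk.dist_le_mul x hx z (hs.frontier_subset hz)
      _ ≤ L * dist x y := by gcongr
  refine LipschitzWith.of_dist_le_mul fun x y => ?_
  by_cases hx : x ∈ s <;> by_cases hy : y ∈ s
  · rw [Set.indicator_of_mem hx, Set.indicator_of_mem hy]
    exact hk.dist_le_mul x hx y hy
  · rw [Set.indicator_of_mem hx, Set.indicator_of_notMem hy, dist_zero_right]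
    exact hmixed hx hy
  · rw [Set.indicator_of_notMem hx, Set.indicator_of_mem hy, dist_zero_left, dist_comm]
    exact hmixed hy hx
  · rw [Set.indicator_of_notMem hx, Set.indicator_of_notMem hy, dist_self]
    positivity

variable [FiniteDimensional ℝ E] [MeasurableSpace E] [BorelSpace E] (μ : Measure E)
  [μ.IsAddHaarMeasure]

lemma setIntegral_det_one_add_of_bijOn {s : Set E} (hs : MeasurableSet s) {k : E → E}
    {k' : E → E →L[ℝ] E} (hk' : ∀ x ∈ s, HasFDerivWithinAt k (k' x) s x)
    (hlt : ∀ x ∈ s, ‖k' x‖ < 1) (hbij : Set.BijOn (fun x => x + k x) s s) :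
    ∫ x in s, (1 + k' x).det ∂μ = μ.real s := by
  have hchange := integral_image_eq_integral_abs_det_fderiv_smul μ hs
    (fun x hx => (hasFDerivWithinAt_id x s).add (hk' x hx)) hbij.injOn fun _ => (1 : ℝ)
  have himage : (fun x => x + k x) '' s = s := hbij.image_eq
  calc ∫ x in s, (1 + k' x).det ∂μ = ∫ x in s, |(1 + k' x).det| • (1 : ℝ) ∂μ := by
        refine setIntegral_congr_fun hs fun x hx => ?_
        simp only [smul_eq_mul, mul_one, abs_of_pos (det_one_add_pos_of_norm_lt_one (hlt x hx))]
    _ = ∫ _ in (fun x => x + k x) '' s, (1 : ℝ) ∂μ := hchange.symm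
    _ = μ.real s := by rw [himage, setIntegral_const, smul_eq_mul, mul_one]

lemma setIntegral_ball_det_one_add_fderiv_of_lipschitzOnWith {k : E → E} {r : ℝ} {L : NNReal}
    (hL : L < 1) (hk : LipschitzOnWith L k (closedBall 0 r))
    (hdiff : ∀ x ∈ ball 0 r, DifferentiableAt ℝ k x) (h0 : ∀ x ∈ sphere 0 r, k x = 0) :
    ∫ x in ball 0 r, (1 + fderiv ℝ k x).det ∂μ = μ.real (ball 0 r) := by
  have := FiniteDimensional.complete ℝ E
  have hfrontier : ∀ x ∈ frontier (closedBall (0 : E) r), k x = 0 := fun x hx =>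
    h0 x (frontier_closedBall_subset_sphere hx)
  have hzero : ∀ x ∉ ball (0 : E) r, (closedBall 0 r).indicator k x = 0 := fun x hx => by
    rw [Set.indicator_apply_eq_zero]
    exact fun hx' => h0 x (mem_sphere.2 (le_antisymm hx' (not_lt.1 hx)))
  have hbij := (bijOn_add_of_lipschitzWith hL
    (lipschitzWith_indicator isClosed_closedBall hk hfrontier) hzero).congr (f₂ := fun x => x + k x)
      fun x hx => by simp only [Set.indicator_of_mem (ball_subset_closedBall hx)]
  refine setIntegral_det_one_add_of_bijOn μ measurableSet_ball
    (fun x hx => (hdiff x hx).hasFDerivAt.hasFDerivWithinAt) (fun x hx => ?_) hbij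
  exact (norm_fderiv_le_of_lipschitzOn ℝ (closedBall_mem_nhds_of_mem hx) hk).trans_lt hL

lemma setIntegral_ball_det_one_add_fderiv {k : E → E} (hk : ContDiff ℝ 1 k) {r : ℝ}
    (h0 : ∀ x ∈ sphere 0 r, k x = 0) :
    ∫ x in ball 0 r, (1 + fderiv ℝ k x).det ∂μ = μ.real (ball 0 r) := by
  obtain ⟨L, hL⟩ := (hk.contDiffOn (s := closedBall 0 r)).exists_lipschitzOnWith one_ne_zero
    (convex_closedBall _ _) (isCompact_closedBall _ _)
  have hdiff : Differentiable ℝ k := hk.differentiable one_ne_zero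
  have hsmall : ∀ t ∈ Set.Ioo (0 : ℝ) (L + 1)⁻¹,
      ∫ x in ball 0 r, (1 + t • fderiv ℝ k x).det ∂μ = μ.real (ball 0 r) := by
    rintro t ⟨ht0, ht⟩
    have hlt : ‖t‖₊ * L < 1 := by
      rw [← NNReal.coe_lt_coe, NNReal.coe_mul, coe_nnnorm, Real.norm_of_nonneg ht0.le]
      have hmul : t * (L + 1) < 1 := by rwa [← lt_div_iff₀ (by positivity), one_div]
      rw [NNReal.coe_one]
      linarith
    simpa only [fderiv_const_smul_field, Pi.smul_apply] using
      setIntegral_ball_det_one_add_fderiv_of_lipschitzOnWith μ hlt (k := t • k)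
        ((lipschitzWith_smul t).comp_lipschitzOnWith hL) (fun x _ => (hdiff x).const_smul t)
        fun x hx => by rw [Pi.smul_apply, h0 x hx, smul_zero]
  choose P hdeg hP using fun x => exists_polynomial_det_one_add_smul (fderiv ℝ k x : E →ₗ[ℝ] E)
  have hP' (x : E) (t : ℝ) : (P x).eval t = (1 + t • fderiv ℝ k x).det := (hP x t).symm
  have hint (t : ℝ) : IntegrableOn (fun x => (P x).eval t) (ball 0 r) μ := by
    have hcont : Continuous fun x => (1 + t • fderiv ℝ k x).det :=
      ContinuousLinearMap.continuous_det.comp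
        (continuous_const.add ((hk.continuous_fderiv one_ne_zero).const_smul t))
    simpa only [hP'] using (hcont.continuousOn.integrableOn_compact
      (isCompact_closedBall 0 r)).mono_set ball_subset_closedBall
  have hone := integral_eval_eq_const_of_infinite hdeg
    (Set.Ioo_infinite (inv_pos.2 (by positivity : (0 : ℝ) < L + 1))) (fun t _ => hint t)
    (fun t ht => by simpa only [hP'] using hsmall t ht) 1
  simpa only [hP', one_smul] using hone
end VolumeOfPerturbedBall

section NoRetraction
open Metric MeasureTheory
variable {E : Type*} [NormedAddCommGroup E] [InnerProductSpace ℝ E] [FiniteDimensional ℝ E]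

lemma det_eq_zero_of_hasFDerivAt_of_norm_eq {g : E → E} {g' : E →L[ℝ] E} {x : E}
    (hg : HasFDerivAt g g' x) {r : ℝ} (hr : r ≠ 0) (hnorm : ∀ y, ‖g y‖ = r) : g'.det = 0 := by
  by_contra hdet
  obtain ⟨v, hv⟩ : ∃ v, g' v = g x :=
    (LinearMap.equivOfDetNeZero (g' : E →ₗ[ℝ] E) hdet).surjective (g x)
  have hsq : HasFDerivAt (fun y => ‖g y‖ ^ 2) (2 • (innerSL ℝ (g x)).comp g') x := hg.norm_sq
  simp only [hnorm] at hsq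
  have hzero := DFunLike.congr_fun (hsq.unique (hasFDerivAt_const (r ^ 2) x)) v
  exact hr (by simpa [hv, hnorm] using hzero)

lemma not_contDiff_of_norm_eq_of_eqOn_sphere {g : E → E} {r : ℝ} (hr : 0 < r)
    (hnorm : ∀ x, ‖g x‖ = r) (hfix : ∀ x ∈ sphere 0 r, g x = x) : ¬ ContDiff ℝ 1 g := by
  intro hg
  borelize E
  have hder (x : E) : 1 + fderiv ℝ (fun y => g y - y) x = fderiv ℝ g x := by
    rw [fderiv_fun_sub (hg.differentiable one_ne_zero x) differentiableAt_fun_id, fderiv_fun_id,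
      ContinuousLinearMap.one_def, add_sub_cancel]
  have hvol := setIntegral_ball_det_one_add_fderiv (volume : Measure E) (hg.sub contDiff_id)
    (k := fun y => g y - y) (r := r) fun x hx => sub_eq_zero.2 (hfix x hx)
  have hdet (x : E) : (fderiv ℝ g x).det = 0 :=
    det_eq_zero_of_hasFDerivAt_of_norm_eq (hg.differentiable one_ne_zero x).hasFDerivAt hr.ne' hnorm
  simp only [hder, hdet, integral_zero] at hvol
  exact (ENNReal.toReal_pos (measure_ball_pos _ _ hr).ne' measure_ball_lt_top.ne).ne hvol

lemma exists_eq_zero_of_eq_self_of_one_le_norm {F : E → E} (hF : Continuous F)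
    (hid : ∀ x, 1 ≤ ‖x‖ → F x = x) : ∃ x, F x = 0 := by
  by_contra! hne
  have hU : {x : E | 1 < ‖x‖} ∈ 𝓝ˢ {x : E | 2 ≤ ‖x‖} :=
    (isOpen_lt continuous_const continuous_norm).mem_nhdsSet.2 fun x (hx : 2 ≤ ‖x‖) =>
      show 1 < ‖x‖ by linarith
  obtain ⟨g, hg, hdist, hgF, -⟩ := hF.exists_contDiff_approx_and_eqOn 1 hF.norm
    (fun x => norm_pos_iff.2 (hne x)) (isClosed_le continuous_const continuous_norm) hU
    (contDiffOn_id.congr fun x hx => hid x hx.le)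
  have hg0 (x : E) : g x ≠ 0 := fun h => by simpa [h] using hdist x
  refine not_contDiff_of_norm_eq_of_eqOn_sphere (g := fun x => (2 / ‖g x‖) • g x) two_pos
    (fun x => ?_) (fun x hx => ?_)
    ((contDiff_const.div (hg.norm ℝ hg0) fun x => norm_ne_zero_iff.2 (hg0 x)).smul hg)
  · rw [norm_smul, norm_div, norm_norm, Real.norm_two,
      div_mul_cancel₀ _ (norm_ne_zero_iff.2 (hg0 x))]
  · have hx2 : ‖x‖ = 2 := mem_sphere_zero_iff_norm.1 hx
    have hgx : g x = x := (hgF hx2.ge).trans (hid x (by rw [hx2]; norm_num))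
    rw [hgx, hx2, div_self (two_ne_zero' ℝ), one_smul]
end NoRetraction

/-! ### Homotopies of maps into the complement of the origin -/

section Homotopy
open Metric
variable {X Y E : Type*} [TopologicalSpace X] [TopologicalSpace Y] [NormedAddCommGroup E]

/-- The maps `a, b : X → E` are continuous, take no zero value and are homotopic as maps into
`E ∖ {0}`. Stated for bare functions, so that explicit formulas can be chained. -/
def NonvanishingHomotopic (a b : X → E) : Prop :=
  ∃ A B : C(X, {y : E // y ≠ 0}), (∀ x, A x = a x) ∧ (∀ x, B x = b x) ∧ A.Homotopic B

namespace NonvanishingHomotopic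

variable {a b c : X → E}

lemma continuous_left (h : NonvanishingHomotopic a b) : Continuous a := by
  obtain ⟨A, -, hA, -⟩ := h
  exact (continuous_subtype_val.comp A.continuous).congr hA

lemma ne_zero_left (h : NonvanishingHomotopic a b) (x : X) : a x ≠ 0 := by
  obtain ⟨A, -, hA, -⟩ := h
  exact hA x ▸ (A x).2

protected lemma symm (h : NonvanishingHomotopic a b) : NonvanishingHomotopic b a :=
  let ⟨A, B, hA, hB, hAB⟩ := h
  ⟨B, A, hB, hA, hAB.symm⟩

protected lemma trans (h : NonvanishingHomotopic a b) (h' : NonvanishingHomotopic b c) :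
    NonvanishingHomotopic a c := by
  obtain ⟨A, B, hA, hB, hAB⟩ := h
  obtain ⟨B', C, hB', hC, hBC⟩ := h'
  obtain rfl : B = B' := by ext x; rw [hB, hB']
  exact ⟨A, C, hA, hC, hAB.trans hBC⟩

lemma comp (h : NonvanishingHomotopic a b) {τ : Y → X} (hτ : Continuous τ) :
    NonvanishingHomotopic (a ∘ τ) (b ∘ τ) :=
  let ⟨A, B, hA, hB, hAB⟩ := h
  ⟨A.comp ⟨τ, hτ⟩, B.comp ⟨τ, hτ⟩, fun x => hA (τ x), fun x => hB (τ x), hAB.comp (.refl _)⟩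

lemma of_homotopy {H : ℝ → X → E}
    (hH : ContinuousOn (fun p : ℝ × X => H p.1 p.2) (Set.Icc 0 1 ×ˢ Set.univ))
    (hne : ∀ t ∈ Set.Icc (0 : ℝ) 1, ∀ x, H t x ≠ 0) :
    NonvanishingHomotopic (H 0) (H 1) := by
  have hcont : Continuous fun p : unitInterval × X => H p.1 p.2 :=
    hH.comp_continuous (f := fun p : unitInterval × X => ((p.1 : ℝ), p.2)) (by fun_prop)
      fun p => ⟨p.1.2, trivial⟩
  exact ⟨⟨fun x => ⟨H 0 x, hne 0 (by simp) x⟩, by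
      exact (hcont.comp (Continuous.prodMk_right (0 : unitInterval))).subtype_mk _⟩,
    ⟨fun x => ⟨H 1 x, hne 1 (by simp) x⟩, by
      exact (hcont.comp (Continuous.prodMk_right (1 : unitInterval))).subtype_mk _⟩,
    fun _ => rfl, fun _ => rfl,
    ⟨{ toFun p := ⟨H p.1 p.2, hne _ p.1.2 _⟩
       continuous_toFun := hcont.subtype_mk _
       map_zero_left _ := rfl
       map_one_left _ := rfl }⟩⟩

end NonvanishingHomotopic

lemma continuous_of_continuous_compl_singleton [T1Space X] {f : X → Y}
    (x₀ : X) (hf : Continuous fun x : ({x₀}ᶜ : Set X) => f x) (hx₀ : ContinuousAt f x₀) :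
    Continuous f := continuous_iff_continuousAt.2 fun x => by
  rcases eq_or_ne x x₀ with rfl | hx
  · exact hx₀
  · exact (isOpen_compl_singleton.isOpenEmbedding_subtypeVal.continuousAt_iff
      (x := ⟨x, hx⟩)).1 hf.continuousAt

lemma exists_nonvanishing_extension_of_nullhomotopic {V : Type*} [NormedAddCommGroup V]
    [NormedSpace ℝ V] [Nontrivial V] {a : sphere (0 : V) 1 → E} {c : E}
    (hnull : NonvanishingHomotopic a fun _ => c) :
    ∃ F : V → E, Continuous F ∧ (∀ x, F x ≠ 0) ∧
      ∀ r : ℝ, 1 ≤ r → ∀ z : sphere (0 : V) 1, F (r • (z : V)) = a z := by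
  obtain ⟨A, B, hA, hB, ⟨H⟩⟩ := hnull.symm
  obtain ⟨z₀⟩ : Nonempty (sphere (0 : V) 1) :=
    (NormedSpace.sphere_nonempty.2 zero_le_one).to_subtype
  have hc : c ≠ 0 := by simpa only [hA] using (A z₀).2
  let s (x : V) : unitInterval := Set.projIcc 0 1 zero_le_one (2 * ‖x‖ - 1)
  let dir (x : ({0}ᶜ : Set V)) : sphere (0 : V) 1 := (homeomorphUnitSphereProd V x).1
  let G (x : ({0}ᶜ : Set V)) : E := H (s x, dir x)
  have hG : Continuous G := by
    have hs : Continuous s := continuous_projIcc.comp (by fun_prop)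
    have hdir : Continuous dir := continuous_fst.comp (homeomorphUnitSphereProd V).continuous
    fun_prop
  classical
  let F (x : V) : E := if h : x = 0 then c else G ⟨x, h⟩
  have hFG (x : V) (h0 : x ≠ 0) : F x = G ⟨x, h0⟩ := dif_neg h0
  have hcenter (x : V) (hx : ‖x‖ < 1 / 2) : F x = c := by
    have hs : s x = 0 := Set.projIcc_of_le_left _ (by linarith)
    by_cases h0 : x = 0
    · exact dif_pos h0
    · simp only [hFG x h0, G, hs, H.apply_zero, hA]
  refine ⟨F, continuous_of_continuous_compl_singleton 0 ?_ ?_, fun x => ?_, fun r hr z => ?_⟩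
  · exact hG.congr fun x => (hFG x x.2).symm
  · refine continuousAt_const.congr (f := fun _ => c) ?_
    filter_upwards [ball_mem_nhds 0 one_half_pos] with x hx
    exact (hcenter x (mem_ball_zero_iff.1 hx)).symm
  · by_cases h0 : x = 0
    · rwa [hcenter x (by simp [h0])]
    · rw [hFG x h0]
      exact (H _).2
  · have hz : ‖(z : V)‖ = 1 := norm_eq_of_mem_sphere z
    have hr0 : 0 < r := one_pos.trans_le hr
    have hrz : ‖r • (z : V)‖ = r := by rw [norm_smul, hz, mul_one, Real.norm_of_nonneg hr0.le]
    have h0 : r • (z : V) ≠ 0 := norm_pos_iff.1 (by rwa [hrz])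
    have hs : s (r • (z : V)) = 1 := Set.projIcc_of_right_le _ (by rw [hrz]; linarith)
    have hdir : dir ⟨r • (z : V), h0⟩ = z := by
      ext
      simp [dir, hrz, hr0.ne', smul_smul]
    simp only [hFG _ h0, G, hs, hdir, H.apply_one, hB]

lemma not_nonvanishingHomotopic_coe_sphere_const {E : Type*} [NormedAddCommGroup E]
    [InnerProductSpace ℝ E] [FiniteDimensional ℝ E] [Nontrivial E] (c : E) :
    ¬ NonvanishingHomotopic (fun z : sphere (0 : E) 1 => (z : E)) fun _ => c := by
  intro hnull
  obtain ⟨F, hF, hF0, hFa⟩ := exists_nonvanishing_extension_of_nullhomotopic hnull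
  obtain ⟨x, hx⟩ := exists_eq_zero_of_eq_self_of_one_le_norm (F := fun x => max 1 ‖x‖ • F x)
    (by fun_prop) fun x hx => by
      have hx0 : ‖x‖ ≠ 0 := (one_pos.trans_le hx).ne'
      have hdir : ‖x‖ • (‖x‖⁻¹ • x) = x := smul_inv_smul₀ hx0 x
      have hFx := hFa ‖x‖ hx ⟨‖x‖⁻¹ • x, by simp [norm_smul, hx0]⟩
      rw [hdir] at hFx
      rw [max_eq_right hx, hFx, hdir]
  exact smul_ne_zero (lt_max_of_lt_left one_pos).ne' (hF0 x) hx
end Homotopy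

namespace NonvanishingHomotopic
variable {X E F : Type*} [TopologicalSpace X] [NormedAddCommGroup E] [NormedAddCommGroup F]
  [NormedSpace ℝ F] {ψ : F → E} {B : Set F} {a b : X → F}

lemma comp_smul_of_starConvex (hB : StarConvex ℝ 0 B) (hψ : ContinuousOn ψ B)
    (hψ0 : ∀ y ∈ B, y ≠ 0 → ψ y ≠ 0) (ha : Continuous a) (haB : ∀ x, a x ∈ B)
    (ha0 : ∀ x, a x ≠ 0) {s : ℝ} (hs0 : 0 < s) (hs1 : s ≤ 1) :
    NonvanishingHomotopic (fun x => ψ (s • a x)) fun x => ψ (a x) := by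
  have hscale {t : ℝ} (ht : t ∈ Set.Icc (0 : ℝ) 1) :
      0 < AffineMap.lineMap s 1 t ∧ AffineMap.lineMap s 1 t ≤ 1 := by
    have := (convex_Icc s (1 : ℝ)).lineMap_mem ⟨le_rfl, hs1⟩ ⟨hs1, le_rfl⟩ ht
    exact ⟨hs0.trans_le this.1, this.2⟩
  have hmem {t : ℝ} (ht : t ∈ Set.Icc (0 : ℝ) 1) (x : X) :
      AffineMap.lineMap s 1 t • a x ∈ B :=
    hB.smul_mem (haB x) (hscale ht).1.le (hscale ht).2
  simpa using of_homotopy (H := fun t x => ψ ((AffineMap.lineMap s 1 t : ℝ) • a x))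
    (hψ.comp (by fun_prop) fun p hp => hmem hp.1 p.2)
    fun t ht x => hψ0 _ (hmem ht x) (smul_ne_zero (hscale ht).1.ne' (ha0 x))

lemma exists_comp_smul [CompactSpace X] (hB : B ∈ 𝓝 0) (hψ : ContinuousOn ψ B)
    (hψ0 : ∀ y ∈ B, y ≠ 0 → ψ y ≠ 0) (h : NonvanishingHomotopic a b) :
    ∃ s : ℝ, 0 < s ∧ s ≤ 1 ∧
      NonvanishingHomotopic (fun x => ψ (s • a x)) fun x => ψ (s • b x) := by
  obtain ⟨A, B', hA, hB', ⟨H⟩⟩ := h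
  let K : Set F := Set.range fun p => (H p : F)
  have hK : IsCompact K := isCompact_range (by fun_prop)
  obtain ⟨s, hs, hs0, hs1⟩ : ∃ s : ℝ, Set.MapsTo (s • ·) K B ∧ 0 < s ∧ s ≤ 1 := by
    have hsmall : ∀ᶠ s : ℝ in 𝓝[>] 0, Set.MapsTo (s • ·) K B :=
      nhdsGT_le_nhdsNE 0 (hK.totallyBounded.isVonNBounded ℝ hB).eventually_nhdsNE_zero
    exact (hsmall.and (Ioc_mem_nhdsGT one_pos)).exists
  refine ⟨s, hs0, hs1, ?_⟩
  have := of_homotopy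
    (H := fun t x => ψ (s • (H (Set.projIcc 0 1 zero_le_one t, x) : F)))
    (hψ.comp (by fun_prop) fun p _ => hs ⟨_, rfl⟩)
    fun t _ x => hψ0 _ (hs ⟨_, rfl⟩) (smul_ne_zero hs0.ne' (H _).2)
  simpa [hA, hB'] using this

end NonvanishingHomotopic

section Cocompact
open Bornology

lemma isBounded_range_of_tendsto_cocompact {V F : Type*} [TopologicalSpace V]
    [PseudoMetricSpace F] {α : V → F} (hα : Continuous α) {c : F}
    (hc : Tendsto α (cocompact V) (𝓝 c)) : IsBounded (Set.range α) := by
  obtain ⟨K, hK, hKc⟩ := mem_cocompact.1 (hc (Metric.ball_mem_nhds c one_pos))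
  refine ((hK.image hα).isBounded.union (Metric.isBounded_ball (x := c) (r := 1))).subset ?_
  rintro _ ⟨x, rfl⟩
  exact (em (x ∈ K)).imp (Set.mem_image_of_mem α) (@hKc x)

variable {V W F : Type*} [TopologicalSpace V] [TopologicalSpace W] [NormedAddCommGroup F]
  [NormedSpace ℝ F] {α : V → F} {β : W → F} {c : F}

lemma eventually_cocompact_notMem_segment [ProperSpace F] (hα : Continuous α) (hβ : Continuous β)
    (hαc : Tendsto α (cocompact V) (𝓝 c)) (hβp : Tendsto β (cocompact W) (cocompact F))
    (hcβ : c ∉ Set.range β) :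
    ∀ᶠ z in cocompact (V × W), β z.2 ∉ segment ℝ (α z.1) c := by
  rw [← coprod_cocompact]
  refine mem_coprod_iff.2 ⟨?_, ?_⟩
  · have hclosed : IsClosed (Set.range β) :=
      (isProperMap_iff_tendsto_cocompact.2 ⟨hβ, hβp⟩).isClosedMap.isClosed_range
    obtain ⟨d, hd, hball⟩ := Metric.mem_nhds_iff.1 (hclosed.isOpen_compl.mem_nhds hcβ)
    refine ⟨_, hαc (Metric.ball_mem_nhds c hd), fun z hz hseg => ?_⟩
    exact hball ((convex_ball c d).segment_subset hz (Metric.mem_ball_self hd) hseg) ⟨_, rfl⟩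
  · have hbdd : IsBounded (convexHull ℝ (insert c (Set.range α))) :=
      isBounded_convexHull.2 ((isBounded_range_of_tendsto_cocompact hα hαc).insert c)
    rw [← Metric.cobounded_eq_cocompact] at hβp
    refine ⟨_, hβp (isBounded_def.1 hbdd), fun z hz hseg => hz ?_⟩
    exact (segment_subset_convexHull (.inr ⟨_, rfl⟩) (.inl rfl)) hseg
end Cocompact

section Complementary
open Metric
variable {E V W F : Type*} [NormedAddCommGroup E] [NormedSpace ℝ E] [FiniteDimensional ℝ E]
  [NormedAddCommGroup V] [NormedSpace ℝ V] [NormedAddCommGroup W] [NormedSpace ℝ W]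
  [NormedAddCommGroup F] [NormedSpace ℝ F]
  {p : E →L[ℝ] V} {q : E →L[ℝ] W} {α : V → F} {β : W → F} {c : F}

lemma nonvanishingHomotopic_sub_const [ProperSpace F] (hpq : Function.Injective (p.prod q))
    (hα : Continuous α) (hβ : Continuous β) (hαβ : ∀ z ≠ 0, α (p z) ≠ β (q z))
    (hαc : Tendsto α (cocompact V) (𝓝 c)) (hβp : Tendsto β (cocompact W) (cocompact F))
    (hcβ : c ∉ Set.range β) {ε : ℝ} (hε : 0 < ε) :
    NonvanishingHomotopic (fun z : sphere (0 : E) 1 => α (p (ε • (z : E))) - β (q (ε • (z : E))))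
      fun _ => c - β 0 := by
  have hsphere (z : sphere (0 : E) 1) : (z : E) ≠ 0 := ne_zero_of_mem_unit_sphere z
  obtain ⟨R, hR⟩ : ∃ R : ℝ, ∀ z : E, R ≤ ‖z‖ → β (q z) ∉ segment ℝ (α (p z)) c := by
    have hprod := (LinearMap.isClosedEmbedding_of_injective
      (LinearMap.ker_eq_bot.2 hpq)).tendsto_cocompact
    have := hprod.eventually (eventually_cocompact_notMem_segment hα hβ hαc hβp hcβ)
    rw [← cobounded_eq_cocompact] at this
    simpa using hasBasis_cobounded_norm.eventually_iff.1 this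
  have hexpand : NonvanishingHomotopic
      (fun z : sphere (0 : E) 1 => α (p (ε • (z : E))) - β (q (ε • (z : E))))
      fun z => α (p (max ε R • (z : E))) - β (q (max ε R • (z : E))) := by
    have hmax : 0 < max ε R := hε.trans_le (le_max_left _ _)
    have := NonvanishingHomotopic.comp_smul_of_starConvex (X := sphere (0 : E) 1)
      (ψ := fun z => α (p z) - β (q z)) (a := fun z => max ε R • (z : E)) (starConvex_univ 0)
      (by fun_prop) (fun z _ hz => sub_ne_zero.2 (hαβ z hz)) (by fun_prop) (fun _ => trivial)
      (fun z => smul_ne_zero hmax.ne' (hsphere z)) (div_pos hε hmax)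
      (div_le_one_of_le₀ (le_max_left _ _) hmax.le)
    simpa only [smul_smul, div_mul_cancel₀ _ hmax.ne'] using this
  have hslide : NonvanishingHomotopic
      (fun z : sphere (0 : E) 1 => α (p (max ε R • (z : E))) - β (q (max ε R • (z : E))))
      fun z => c - β (q (max ε R • (z : E))) := by
    have := NonvanishingHomotopic.of_homotopy (X := sphere (0 : E) 1)
      (H := fun t z =>
        AffineMap.lineMap (α (p (max ε R • (z : E)))) c t - β (q (max ε R • (z : E))))
      (by simp only [AffineMap.lineMap_apply_module]; fun_prop)
      fun t ht z h => hR (max ε R • (z : E))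
        (by simp [norm_smul, le_abs.2 (.inl (le_max_right ε R))])
        (segment_eq_image_lineMap ℝ _ c ▸ ⟨t, ht, sub_eq_zero.1 h⟩)
    simpa using this
  have hcontract : NonvanishingHomotopic (fun _ : sphere (0 : E) 1 => c - β 0)
      fun z => c - β (q (max ε R • (z : E))) := by
    have := NonvanishingHomotopic.of_homotopy (X := sphere (0 : E) 1)
      (H := fun t z => c - β (t • q (max ε R • (z : E))))
      (by fun_prop)
      fun t _ z h => hcβ ⟨_, (sub_eq_zero.1 h).symm⟩
    simpa using this
  exact (hexpand.trans hslide).trans hcontract.symm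

end Complementary

section Intersection
open Metric

lemma eventually_forall_mem_closedBall_smul_mem {E : Type*} [SeminormedAddCommGroup E]
    [NormedSpace ℝ E] {s : Set E} (hs : s ∈ 𝓝 0) (r : ℝ) :
    ∀ᶠ ε : ℝ in 𝓝[>] 0, ∀ z ∈ closedBall (0 : E) r, ε • z ∈ s :=
  nhdsGT_le_nhdsNE 0 (NormedSpace.isVonNBounded_closedBall ℝ E r hs).eventually_nhdsNE_zero

variable {E : Type*} [NormedAddCommGroup E] [InnerProductSpace ℝ E]
  (Φ : OpenPartialHomeomorph E E)

lemma reflection_eq_starProjection_sub (U : Submodule ℝ E) [U.HasOrthogonalProjection] (z : E) :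
    U.reflection z = U.starProjection z - Uᗮ.starProjection z := by
  rw [U.reflection_apply, U.starProjection_orthogonal_val]
  module

lemma nonvanishingHomotopic_sub_orthogonal_reflection (U : Submodule ℝ E)
    [U.HasOrthogonalProjection] {ε : ℝ} (hε : ε ≠ 0)
    (hball : ∀ z ∈ closedBall (0 : E) 2, ε • z ∈ Φ.source) :
    NonvanishingHomotopic
      (fun z : sphere (0 : E) 1 => Φ (ε • U.starProjection z) - Φ (ε • Uᗮ.starProjection z))
      fun z => Φ (ε • U.reflection z) - Φ 0 := by
  let P (z : E) : E := U.starProjection z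
  let Q (z : E) : E := Uᗮ.starProjection z
  have hP (z : sphere (0 : E) 1) : ‖P z‖ ≤ 1 :=
    (U.norm_starProjection_apply_le _).trans (norm_eq_of_mem_sphere z).le
  have hQ {t : ℝ} (ht : t ∈ Set.Icc (0 : ℝ) 1) (z : sphere (0 : E) 1) : ‖t • Q z‖ ≤ 1 := by
    rw [norm_smul, Real.norm_of_nonneg ht.1]
    exact mul_le_one₀ ht.2 (norm_nonneg _)
      ((Uᗮ.norm_starProjection_apply_le _).trans (norm_eq_of_mem_sphere z).le)
  have hleft {t : ℝ} (ht : t ∈ Set.Icc (0 : ℝ) 1) (z : sphere (0 : E) 1) :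
      ε • (P z - t • Q z) ∈ Φ.source :=
    hball _ (mem_closedBall_zero_iff.2 ((norm_sub_le _ _).trans (by linarith [hP z, hQ ht z])))
  have hright {t : ℝ} (ht : t ∈ Set.Icc (0 : ℝ) 1) (z : sphere (0 : E) 1) :
      ε • (1 - t) • Q z ∈ Φ.source :=
    hball _ (mem_closedBall_zero_iff.2 (by linarith [hQ (Set.Icc.one_sub_mem ht) z]))
  have hfold := NonvanishingHomotopic.of_homotopy (X := sphere (0 : E) 1)
    (H := fun t z => Φ (ε • (P z - t • Q z)) - Φ (ε • (1 - t) • Q z))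
    ((Φ.continuousOn.comp (by fun_prop) fun x hx => hleft hx.1 x.2).sub
      (Φ.continuousOn.comp (by fun_prop) fun x hx => hright hx.1 x.2))
    fun t ht z h => by
      have hPQ : P z - t • Q z = (1 - t) • Q z :=
        smul_right_injective E hε (Φ.injOn (hleft ht z) (hright ht z) (sub_eq_zero.1 h))
      have hrefl : U.reflection (z : E) = 0 := by
        rw [reflection_eq_starProjection_sub]
        rwa [sub_smul, one_smul, sub_left_inj, ← sub_eq_zero] at hPQ
      exact ne_zero_of_mem_unit_sphere z
        ((LinearIsometryEquiv.map_eq_zero_iff _).1 hrefl)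
  simpa [P, Q, reflection_eq_starProjection_sub] using hfold

variable [FiniteDimensional ℝ E] [Nontrivial E]

lemma eventually_not_nonvanishingHomotopic_of_apply_zero (h0 : (0 : E) ∈ Φ.source)
    (hΦ0 : Φ 0 = 0) :
    ∀ᶠ ε : ℝ in 𝓝[>] 0, ∀ c : E,
      ¬ NonvanishingHomotopic (fun z : sphere (0 : E) 1 => Φ (ε • (z : E))) fun _ => c := by
  obtain ⟨ρ, hρ, hball⟩ :=
    Metric.isOpen_iff.1 Φ.open_target 0 (hΦ0 ▸ Φ.map_source h0)
  have hsymm_ne (w : E) (hw : w ∈ ball (0 : E) ρ) (hw0 : w ≠ 0) : Φ.symm w ≠ 0 := fun h =>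
    hw0 (by rw [← Φ.right_inv (hball hw), h, hΦ0])
  have hpre : Φ.source ∩ Φ ⁻¹' ball 0 ρ ∈ 𝓝 0 :=
    (Φ.isOpen_inter_preimage isOpen_ball).mem_nhds ⟨h0, by simpa [hΦ0]⟩
  filter_upwards [eventually_forall_mem_closedBall_smul_mem hpre 1, Ioc_mem_nhdsGT one_pos]
    with ε hε hε01 c hnull
  have hεz (z : sphere (0 : E) 1) := hε z (sphere_subset_closedBall z.2)
  obtain ⟨s, hs0, hs1, hs⟩ :=
    hnull.exists_comp_smul (ball_mem_nhds 0 hρ) (Φ.continuousOn_symm.mono hball) hsymm_ne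
  have hcontract := NonvanishingHomotopic.comp_smul_of_starConvex
    ((convex_ball 0 ρ).starConvex (mem_ball_self hρ)) (Φ.continuousOn_symm.mono hball) hsymm_ne
    hnull.continuous_left (fun z => (hεz z).2) hnull.ne_zero_left hs0 hs1
  simp only [Φ.left_inv (hεz _).1] at hcontract
  have hscale := NonvanishingHomotopic.comp_smul_of_starConvex (starConvex_univ 0)
    (ψ := fun z : E => z) (by fun_prop) (fun _ _ hz => hz) continuous_subtype_val
    (fun _ => trivial) (fun z : sphere (0 : E) 1 => ne_zero_of_mem_unit_sphere z) hε01.1 hε01.2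
  exact not_nonvanishingHomotopic_coe_sphere_const _
    (hscale.symm.trans (hcontract.symm.trans hs))

lemma eventually_not_nonvanishingHomotopic_sub_apply_zero (h0 : (0 : E) ∈ Φ.source) :
    ∀ᶠ ε : ℝ in 𝓝[>] 0, ∀ c : E,
      ¬ NonvanishingHomotopic (fun z : sphere (0 : E) 1 => Φ (ε • (z : E)) - Φ 0) fun _ => c :=
  eventually_not_nonvanishingHomotopic_of_apply_zero
    (Φ.transHomeomorph (Homeomorph.subRight (Φ 0))) h0 (sub_self _)

lemma eventually_not_nonvanishingHomotopic_sub_orthogonal (U : Submodule ℝ E)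
    (h0 : (0 : E) ∈ Φ.source) :
    ∀ᶠ ε : ℝ in 𝓝[>] 0, ∀ c : E,
      ¬ NonvanishingHomotopic (fun z : sphere (0 : E) 1 =>
        Φ (ε • U.starProjection z) - Φ (ε • Uᗮ.starProjection z)) fun _ => c := by
  filter_upwards [eventually_not_nonvanishingHomotopic_sub_apply_zero Φ h0,
    eventually_forall_mem_closedBall_smul_mem (Φ.open_source.mem_nhds h0) 2, self_mem_nhdsWithin]
    with ε hε hball hε0 c hnull
  let τ (z : sphere (0 : E) 1) : sphere (0 : E) 1 := ⟨U.reflection z, by simp⟩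
  have hreflected :=
    ((nonvanishingHomotopic_sub_orthogonal_reflection Φ U hε0.ne' hball).symm.trans hnull).comp
      (show Continuous τ by fun_prop)
  exact hε c (by simpa [Function.comp_def, τ] using hreflected)

lemma false_of_tendsto_cocompact_orthogonal {U : Submodule ℝ E} {c : E}
    (hU : (U : Set E) ⊆ Φ.source) (hUc : (Uᗮ : Set E) ⊆ Φ.source)
    (hc : Tendsto (fun x : U => Φ x) (cocompact U) (𝓝 c))
    (hproper : Tendsto (fun y : Uᗮ => Φ y) (cocompact Uᗮ) (cocompact E))
    (hne : ∀ y ∈ Uᗮ, Φ y ≠ c) : False := by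
  obtain ⟨ε, hε, hε0⟩ := ((eventually_not_nonvanishingHomotopic_sub_orthogonal Φ U
    (hU U.zero_mem)).and self_mem_nhdsWithin).exists
  have hnull := nonvanishingHomotopic_sub_const (p := U.orthogonalProjectionOnto)
    (q := Uᗮ.orthogonalProjectionOnto) (α := fun x => Φ x) (β := fun y => Φ y) ?_
    (Φ.continuousOn.comp_continuous continuous_subtype_val fun x => hU x.2)
    (Φ.continuousOn.comp_continuous continuous_subtype_val fun y => hUc y.2)
    ?_ hc hproper ?_ hε0
  · simp only [map_smul, Submodule.coe_smul, ← Submodule.starProjection_apply] at hnull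
    exact hε _ hnull
  · intro z w h
    have h := Prod.ext_iff.1 h
    rw [← U.starProjection_add_starProjection_orthogonal z,
      ← U.starProjection_add_starProjection_orthogonal w]
    exact congr_arg₂ _ (congr_arg Subtype.val h.1) (congr_arg Subtype.val h.2)
  · intro z hz h
    have hPQ := Φ.injOn (hU (Subtype.coe_prop _)) (hUc (Subtype.coe_prop _)) h
    refine hz ((LinearIsometryEquiv.map_eq_zero_iff U.reflection).1 ?_)
    rw [reflection_eq_starProjection_sub]
    exact sub_eq_zero.2 hPQ
  · rintro ⟨y, hy⟩
    exact hne y y.2 hy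
end Intersection

/-! ### Hyperbolic fixed points -/

section StableManifold
variable {M : Type*} [TopologicalSpace M]

/-- The points whose forward orbit under `g` converges to `p`; the unstable manifold of `p` is
`stableManifold g⁻¹ p`. Only the bijection `g` matters, its continuity is never used. -/
def stableManifold (g : Equiv.Perm M) (p : M) : Set M :=
  {x | Tendsto (fun k : ℕ => (g ^ k) x) atTop (𝓝 p)}

lemma disjoint_stableManifold [T2Space M] (g : Equiv.Perm M) {p q : M} (hpq : p ≠ q) :
    Disjoint (stableManifold g p) (stableManifold g q) :=
  Set.disjoint_left.2 fun _ hp hq => hpq (tendsto_nhds_unique hp hq)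

end StableManifold

/-- A chart around a fixed point `p` of `g` that covers an invariant neighbourhood and conjugates
`g` to `model`, which expands the `unstable` component by the factor `rate` and contracts the
component in `unstableᗮ` by the same factor. -/
structure HyperbolicChart_s11 (E : Type*) [NormedAddCommGroup E] [InnerProductSpace ℝ E]
    [FiniteDimensional ℝ E] {M : Type*} [TopologicalSpace M] (g : Equiv.Perm M) (p : M) where
  chart : E → M
  isOpenEmbedding : IsOpenEmbedding chart
  chart_zero : chart 0 = p
  model : Equiv.Perm E
  semiconj : Function.Semiconj chart model g
  unstable : Submodule ℝ E
  rate : ℝ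
  one_lt_rate : 1 < rate
  norm_unstable_model (y : E) :
    ‖unstable.starProjection (model y)‖ = rate * ‖unstable.starProjection y‖
  norm_stable_model (y : E) :
    rate * ‖unstableᗮ.starProjection (model y)‖ = ‖unstableᗮ.starProjection y‖

namespace HyperbolicChart_s11
variable {E : Type*} [NormedAddCommGroup E] [InnerProductSpace ℝ E] [FiniteDimensional ℝ E]
  {M : Type*} [TopologicalSpace M] {g : Equiv.Perm M} {p : M}

section
variable (h : HyperbolicChart_s11 E g p)

/-- The same chart, for the inverse map. -/
noncomputable def symm : HyperbolicChart_s11 E g⁻¹ p where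
  __ := h
  model := h.model⁻¹
  semiconj y := g.injective <| by simp [← h.semiconj.eq]
  unstable := h.unstableᗮ
  norm_unstable_model y := by
    simpa using (h.norm_stable_model (h.model⁻¹ y)).symm
  norm_stable_model y := by
    simpa using (h.norm_unstable_model (h.model⁻¹ y)).symm

lemma map_chart_nhds_zero : map h.chart (𝓝 0) = 𝓝 p := by
  rw [h.isOpenEmbedding.map_nhds_eq, h.chart_zero]

lemma chart_model_pow (k : ℕ) (y : E) : h.chart ((h.model ^ k) y) = (g ^ k) (h.chart y) := by
  simpa only [Equiv.Perm.iterate_eq_pow] using (h.semiconj.iterate_right k).eq y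

lemma norm_unstable_model_pow (k : ℕ) (y : E) :
    ‖h.unstable.starProjection ((h.model ^ k) y)‖ = h.rate ^ k * ‖h.unstable.starProjection y‖ := by
  induction k with
  | zero => simp
  | succ k ih => rw [pow_succ', Equiv.Perm.mul_apply, h.norm_unstable_model, ih, pow_succ']; ring

lemma norm_stable_model_pow (k : ℕ) (y : E) :
    h.rate ^ k * ‖h.unstableᗮ.starProjection ((h.model ^ k) y)‖ =
      ‖h.unstableᗮ.starProjection y‖ := by
  induction k with
  | zero => simp
  | succ k ih =>
    rw [pow_succ' h.model, Equiv.Perm.mul_apply, pow_succ, mul_assoc, h.norm_stable_model, ih]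

/-- The same chart, for a power of the map. -/
noncomputable def pow {k : ℕ} (hk : k ≠ 0) {g' : Equiv.Perm M} (hg' : g' = g ^ k) :
    HyperbolicChart_s11 E g' p where
  __ := h
  model := h.model ^ k
  semiconj y := by rw [h.chart_model_pow, hg']
  rate := h.rate ^ k
  one_lt_rate := one_lt_pow₀ h.one_lt_rate hk
  norm_unstable_model := h.norm_unstable_model_pow k
  norm_stable_model := h.norm_stable_model_pow k

lemma mem_range_of_pow_mem_range {k : ℕ} {x : M} (hx : (g ^ k) x ∈ Set.range h.chart) :
    x ∈ Set.range h.chart := by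
  obtain ⟨y, hy⟩ := hx
  refine ⟨(h.model ^ k)⁻¹ y, (g ^ k).injective ?_⟩
  rw [← hy, ← h.chart_model_pow, Equiv.Perm.coe_inv, Equiv.apply_symm_apply]

lemma rate_pow_pos (k : ℕ) : 0 < h.rate ^ k := pow_pos (one_pos.trans h.one_lt_rate) k

lemma model_pow_mem_stable {y : E} (hy : y ∈ h.unstableᗮ) (k : ℕ) :
    (h.model ^ k) y ∈ h.unstableᗮ := by
  rw [← h.unstable.starProjection_apply_eq_zero_iff, ← norm_eq_zero, h.norm_unstable_model_pow,
    (h.unstable.starProjection_apply_eq_zero_iff).2 hy, norm_zero, mul_zero]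

lemma norm_model_pow_of_mem_stable {y : E} (hy : y ∈ h.unstableᗮ) (k : ℕ) :
    ‖(h.model ^ k) y‖ = ‖y‖ / h.rate ^ k := by
  have hnorm := h.norm_stable_model_pow k y
  rw [Submodule.starProjection_eq_self_iff.2 hy,
    Submodule.starProjection_eq_self_iff.2 (h.model_pow_mem_stable hy k)] at hnorm
  rw [eq_div_iff (h.rate_pow_pos k).ne', mul_comm, hnorm]

lemma mem_image_stable_of_mapClusterPt {x : M}
    (hx : MapClusterPt p atTop fun k : ℕ => (g ^ k) x) : x ∈ h.chart '' h.unstableᗮ := by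
  have hball : ∃ᶠ k : ℕ in atTop, (g ^ k) x ∈ h.chart '' Metric.ball 0 1 :=
    hx.frequently (h.map_chart_nhds_zero.ge (image_mem_map (Metric.ball_mem_nhds 0 one_pos)))
  obtain ⟨k₀, hk₀⟩ := hball.exists
  obtain ⟨y, rfl⟩ := h.mem_range_of_pow_mem_range (Set.image_subset_range _ _ hk₀)
  refine ⟨y, (h.unstable.starProjection_apply_eq_zero_iff).1 ?_, rfl⟩
  by_contra hPy
  have hescape : Tendsto (fun k => h.rate ^ k * ‖h.unstable.starProjection y‖) atTop atTop :=
    (tendsto_pow_atTop_atTop_of_one_lt h.one_lt_rate).atTop_mul_const (norm_pos_iff.2 hPy)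
  obtain ⟨k, hk, hfar⟩ := (hball.and_eventually (hescape.eventually_ge_atTop 1)).exists
  rw [← h.chart_model_pow, h.isOpenEmbedding.injective.mem_set_image, mem_ball_zero_iff] at hk
  rw [← h.norm_unstable_model_pow] at hfar
  exact (hfar.trans (h.unstable.norm_starProjection_apply_le _)).not_gt hk

lemma eventually_mapsTo_image_stable {B : Set E} (hB : Bornology.IsBounded B)
    (hBs : B ⊆ h.unstableᗮ) {N : Set M} (hN : N ∈ 𝓝 p) :
    ∀ᶠ k : ℕ in atTop, Set.MapsTo (g ^ k) (h.chart '' B) N := by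
  obtain ⟨r, hr, hball⟩ := Metric.mem_nhds_iff.1
    (mem_map.1 (h.map_chart_nhds_zero.le hN))
  obtain ⟨R, hR⟩ := hB.exists_norm_le
  have hshrink : Tendsto (fun k => R / h.rate ^ k) atTop (𝓝 0) :=
    (tendsto_pow_atTop_atTop_of_one_lt h.one_lt_rate).const_div_atTop R
  filter_upwards [hshrink.eventually_lt_const hr] with k hk
  rintro _ ⟨y, hy, rfl⟩
  rw [← h.chart_model_pow]
  apply hball
  rw [mem_ball_zero_iff, h.norm_model_pow_of_mem_stable (hBs hy)]
  exact (div_le_div_of_nonneg_right (hR y hy) (h.rate_pow_pos k).le).trans_lt hk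

end

lemma stableManifold_eq (h : HyperbolicChart_s11 E g p) :
    stableManifold g p = h.chart '' h.unstableᗮ := by
  refine Set.Subset.antisymm
    (fun x hx => h.mem_image_stable_of_mapClusterPt hx.mapClusterPt) ?_
  rintro _ ⟨y, hy, rfl⟩ N hN
  exact (h.eventually_mapsTo_image_stable (Bornology.isBounded_singleton (x := y))
    (Set.singleton_subset_iff.2 hy) hN).mono fun k hk => hk ⟨y, rfl, rfl⟩

lemma stableManifold_inv_eq (h : HyperbolicChart_s11 E g p) :
    stableManifold g⁻¹ p = h.chart '' h.unstable := by
  simpa [symm] using h.symm.stableManifold_eq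

lemma stableManifold_pow (h : HyperbolicChart_s11 E g p) {k : ℕ} (hk : k ≠ 0) :
    stableManifold (g ^ k) p = stableManifold g p :=
  (h.pow hk rfl).stableManifold_eq.trans h.stableManifold_eq.symm

lemma eventually_mapsTo_of_isCompact (h : HyperbolicChart_s11 E g p) {K : Set M} (hK : IsCompact K)
    (hKs : K ⊆ stableManifold g p) {N : Set M} (hN : N ∈ 𝓝 p) :
    ∀ᶠ k : ℕ in atTop, Set.MapsTo (g ^ k) K N := by
  rw [h.stableManifold_eq] at hKs
  have hrange : K ⊆ Set.range h.chart := hKs.trans (Set.image_subset_range _ _)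
  have hpre : h.chart ⁻¹' K ⊆ h.unstableᗮ := by
    rw [← h.isOpenEmbedding.injective.preimage_image h.unstableᗮ]
    exact Set.preimage_mono hKs
  rw [← Set.image_preimage_eq_of_subset hrange]
  exact h.eventually_mapsTo_image_stable
    (h.isOpenEmbedding.isInducing.isCompact_preimage' hK hrange).isBounded hpre hN

lemma mem_stableManifold_self (h : HyperbolicChart_s11 E g p) : p ∈ stableManifold g p := by
  rw [h.stableManifold_eq]
  exact ⟨0, zero_mem _, h.chart_zero⟩

lemma eq_of_mem_stableManifold (h : HyperbolicChart_s11 E g p) [T2Space M] {q : M}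
    (hq : p ∈ stableManifold g q) : p = q := by
  by_contra hpq
  exact Set.disjoint_left.1 (disjoint_stableManifold g hpq) h.mem_stableManifold_self hq

lemma stableManifold_inter_stableManifold_inv (h : HyperbolicChart_s11 E g p) :
    stableManifold g p ∩ stableManifold g⁻¹ p ⊆ {p} := by
  rw [h.stableManifold_eq, h.stableManifold_inv_eq,
    ← Set.image_inter h.isOpenEmbedding.injective]
  rintro _ ⟨y, ⟨hyc, hy⟩, rfl⟩
  rw [(Submodule.disjoint_def.1 h.unstable.orthogonal_disjoint) y hy hyc, h.chart_zero]
  rfl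

end HyperbolicChart_s11

namespace HyperbolicChart_s11
variable {E : Type*} [NormedAddCommGroup E] [InnerProductSpace ℝ E] [FiniteDimensional ℝ E]
  {M : Type*} [TopologicalSpace M] {g : Equiv.Perm M} {p q : M}

section
variable (h : HyperbolicChart_s11 E g p)

lemma exists_pow_model_eq_of_mem_unstable {x : E} (hx : x ∈ h.unstable) {m : ℕ}
    (hxm : h.rate ^ m ≤ ‖x‖) :
    ∃ k ≥ m, ∃ y ∈ h.unstable, 1 ≤ ‖y‖ ∧ ‖y‖ ≤ h.rate ∧ (h.model ^ k) y = x := by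
  obtain ⟨k, hk, hk'⟩ := exists_nat_pow_near
    ((one_le_pow₀ h.one_lt_rate.le).trans hxm) h.one_lt_rate
  have hmk : m ≤ k := Nat.lt_succ_iff.1 ((pow_lt_pow_iff_right₀ h.one_lt_rate).1 (hxm.trans_lt hk'))
  have hnorm : ‖((h.model ^ k)⁻¹) x‖ = ‖x‖ / h.rate ^ k := by
    simpa [symm] using h.symm.norm_model_pow_of_mem_stable (by simpa [symm] using hx) k
  have hmem : ((h.model ^ k)⁻¹) x ∈ h.unstable := by
    simpa [symm] using h.symm.model_pow_mem_stable (by simpa [symm] using hx) k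
  refine ⟨k, hmk, (h.model ^ k)⁻¹ x, hmem, ?_, ?_, by simp⟩
  · rwa [hnorm, one_le_div (h.rate_pow_pos k)]
  · rw [hnorm, div_le_iff₀ (h.rate_pow_pos k), ← pow_succ']
    exact hk'.le

lemma tendsto_chart_cocompact_unstable (hq : HyperbolicChart_s11 E g q)
    (hsub : stableManifold g⁻¹ p \ {p} ⊆ stableManifold g q) :
    Tendsto (fun x : h.unstable => h.chart x) (cocompact h.unstable) (𝓝 q) := by
  intro N hN
  let D : Set E := h.unstable ∩ (Metric.closedBall 0 h.rate \ Metric.ball 0 1)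
  have hD : IsCompact D := ((isCompact_closedBall 0 h.rate).diff Metric.isOpen_ball).inter_left
    (Submodule.closed_of_finiteDimensional _)
  have hDq : h.chart '' D ⊆ stableManifold g q := by
    rintro _ ⟨y, hy, rfl⟩
    refine hsub ⟨h.stableManifold_inv_eq ▸ ⟨y, hy.1, rfl⟩, fun hyp => ?_⟩
    have hy0 : y = 0 := h.isOpenEmbedding.injective (hyp.trans h.chart_zero.symm)
    exact hy.2.2 (by simp [hy0])
  obtain ⟨m, hm⟩ := eventually_atTop.1 (hq.eventually_mapsTo_of_isCompact
    (hD.image h.isOpenEmbedding.continuous) hDq hN)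
  rw [← Metric.cobounded_eq_cocompact]
  refine (hasBasis_cobounded_norm (E := h.unstable)).mem_iff.2 ⟨h.rate ^ m, trivial, fun x hx => ?_⟩
  obtain ⟨k, hmk, y, hy, hy1, hyc, hyx⟩ := h.exists_pow_model_eq_of_mem_unstable x.2 hx
  have hyD : y ∈ D := ⟨hy, by simpa using hyc, by simpa using hy1⟩
  have := hm k hmk ⟨y, hyD, rfl⟩
  rwa [← h.chart_model_pow, hyx] at this

lemma tendsto_chart_cocompact_stable (hq : HyperbolicChart_s11 E g⁻¹ q)
    (hsub : stableManifold g p \ {p} ⊆ stableManifold g⁻¹ q) :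
    Tendsto (fun y : h.unstableᗮ => h.chart y) (cocompact h.unstableᗮ) (𝓝 q) :=
  h.symm.tendsto_chart_cocompact_unstable hq (by rwa [inv_inv])

end
end HyperbolicChart_s11

lemma exists_subset_of_isPreconnected_of_pairwiseDisjoint {X ι : Type*} [TopologicalSpace X]
    {s : Set X} (hs : IsPreconnected s) (hne : s.Nonempty) {t : Set ι} {u : ι → Set X}
    (hu : ∀ i ∈ t, IsOpen (u i)) (hdisj : t.PairwiseDisjoint u) (hsub : s ⊆ ⋃ i ∈ t, u i) :
    ∃ i ∈ t, s ⊆ u i := by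
  obtain ⟨x, hx⟩ := hne
  obtain ⟨i, hi, hxi⟩ := Set.mem_iUnion₂.1 (hsub hx)
  refine ⟨i, hi, hs.subset_left_of_subset_union (v := ⋃ j ∈ t \ {i}, u j) (hu i hi)
    (isOpen_biUnion fun j hj => hu j hj.1) ?_ ?_ ⟨x, hx, hxi⟩⟩
  · exact Set.disjoint_iUnion₂_right.2 fun j hj => hdisj hi hj.1 (Ne.symm hj.2)
  · intro y hy
    obtain ⟨j, hj, hyj⟩ := Set.mem_iUnion₂.1 (hsub hy)
    rcases eq_or_ne j i with rfl | hji
    · exact .inl hyj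
    · exact .inr (Set.mem_biUnion (show j ∈ t \ {i} from ⟨hj, hji⟩) hyj)

namespace HyperbolicChart_s11
variable {E : Type*} [NormedAddCommGroup E] [InnerProductSpace ℝ E] [FiniteDimensional ℝ E]
  {M : Type*} [TopologicalSpace M] {g : Equiv.Perm M} {p q : M} (h : HyperbolicChart_s11 E g p)

lemma isConnected_stableManifold_inv_diff (hdim : 2 ≤ Module.finrank ℝ h.unstable) :
    IsConnected (stableManifold g⁻¹ p \ {p}) := by
  have himage : stableManifold g⁻¹ p \ {p} = (fun x : h.unstable => h.chart x) '' {0}ᶜ := by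
    have hp : ({p} : Set M) = h.chart '' {0} := by rw [Set.image_singleton, h.chart_zero]
    rw [h.stableManifold_inv_eq, hp, ← Set.image_sdiff h.isOpenEmbedding.injective]
    ext x
    simp [and_assoc, and_left_comm]
  rw [himage]
  exact (isConnected_compl_singleton_of_one_lt_rank
    (by exact_mod_cast Module.lt_rank_of_lt_finrank (n := 1) hdim) 0).image _
    (h.isOpenEmbedding.continuous.comp continuous_subtype_val).continuousOn

lemma stableManifold_eq_range (hU : h.unstable = ⊥) : stableManifold g p = Set.range h.chart := by
  rw [h.stableManifold_eq, hU, Submodule.bot_orthogonal_eq_top, Submodule.top_coe,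
    Set.image_univ]

lemma stableManifold_eq_singleton (hU : h.unstable = ⊤) : stableManifold g p = {p} := by
  rw [h.stableManifold_eq, hU, Submodule.top_orthogonal_eq_bot, Submodule.bot_coe,
    Set.image_singleton, h.chart_zero]

lemma isOpen_stableManifold (hU : h.unstable = ⊥) : IsOpen (stableManifold g p) := by
  rw [h.stableManifold_eq_range hU]
  exact h.isOpenEmbedding.isOpen_range

end HyperbolicChart_s11

/-! ### Systems of hyperbolic fixed points -/

/-- A bijection whose limit points of forward and of backward orbits all lie in a set of hyperbolic
fixed points; this is what remains of a regular homeomorphism after passing to a power. -/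
structure HyperbolicSystem (E : Type*) [NormedAddCommGroup E] [InnerProductSpace ℝ E]
    [FiniteDimensional ℝ E] (M : Type*) [TopologicalSpace M] where
  map : Equiv.Perm M
  fixedPts : Set M
  hyperbolicChart (q : fixedPts) : HyperbolicChart_s11 E map q
  mem_of_mapClusterPt {x q : M} : MapClusterPt q atTop (fun k : ℕ => (map ^ k) x) → q ∈ fixedPts
  mem_of_mapClusterPt_inv {x q : M} :
    MapClusterPt q atTop (fun k : ℕ => (map⁻¹ ^ k) x) → q ∈ fixedPts

namespace HyperbolicSystem
variable {E : Type*} [NormedAddCommGroup E] [InnerProductSpace ℝ E] [FiniteDimensional ℝ E]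
  {M : Type*} [TopologicalSpace M] (S : HyperbolicSystem E M)

/-- The inverse system: stable and unstable manifolds, sinks and sources are exchanged. -/
noncomputable def symm : HyperbolicSystem E M where
  map := S.map⁻¹
  fixedPts := S.fixedPts
  hyperbolicChart q := (S.hyperbolicChart q).symm
  mem_of_mapClusterPt := S.mem_of_mapClusterPt_inv
  mem_of_mapClusterPt_inv h := S.mem_of_mapClusterPt (by simpa only [inv_inv] using h)

/-- The unstable subspace at a fixed point; its dimension is the Morse index. -/
def unstable (q : S.fixedPts) : Submodule ℝ E := (S.hyperbolicChart q).unstable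

/-- A fixed point that is neither a sink (`unstable = ⊥`) nor a source (`unstable = ⊤`). -/
def IsSaddle (q : S.fixedPts) : Prop := S.unstable q ≠ ⊥ ∧ S.unstable q ≠ ⊤

lemma isSaddle_symm {q : S.fixedPts} (h : S.symm.IsSaddle q) : S.IsSaddle q := by
  refine ⟨fun hq => h.2 ?_, fun hq => h.1 ?_⟩
  · exact (congr_arg _ hq).trans Submodule.bot_orthogonal_eq_top
  · exact (congr_arg _ hq).trans Submodule.top_orthogonal_eq_bot

lemma unstable_symm_eq_bot {q : S.fixedPts} : S.symm.unstable q = ⊥ ↔ S.unstable q = ⊤ :=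
  Submodule.orthogonal_eq_bot_iff

lemma exists_mem_stableManifold [CompactSpace M] (x : M) :
    ∃ q : S.fixedPts, x ∈ stableManifold S.map q := by
  obtain ⟨q, hq⟩ := exists_clusterPt_of_compactSpace
    (Filter.map (fun k : ℕ => (S.map ^ k) x) atTop)
  let q' : S.fixedPts := ⟨q, S.mem_of_mapClusterPt hq⟩
  refine ⟨q', ?_⟩
  rw [(S.hyperbolicChart q').stableManifold_eq]
  exact (S.hyperbolicChart q').mem_image_stable_of_mapClusterPt hq

variable [T2Space M]

lemma pairwiseDisjoint_stableManifold (t : Set S.fixedPts) :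
    t.PairwiseDisjoint fun q => stableManifold S.map q :=
  fun _ _ _ _ hpq => disjoint_stableManifold S.map (Subtype.coe_ne_coe.2 hpq)

lemma eq_of_mem_stableManifold {p q : S.fixedPts}
    (hpq : (p : M) ∈ stableManifold S.map (q : M)) : p = q :=
  Subtype.ext ((S.hyperbolicChart p).eq_of_mem_stableManifold hpq)

lemma chart_ne_of_mem_stable {p q : S.fixedPts} (hpq : p ≠ q) {y : E} (hy : y ∈ (S.unstable p)ᗮ) :
    (S.hyperbolicChart p).chart y ≠ q := fun e =>
  hpq (S.eq_of_mem_stableManifold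
    (by rw [← e, (S.hyperbolicChart p).stableManifold_eq]; exact ⟨y, hy, rfl⟩)).symm

lemma chart_ne_of_mem_unstable {p q : S.fixedPts} (hpq : p ≠ q) {x : E} (hx : x ∈ S.unstable p) :
    (S.hyperbolicChart p).chart x ≠ q :=
  S.symm.chart_ne_of_mem_stable hpq ((S.unstable p).le_orthogonal_orthogonal hx)

variable [CompactSpace M]

lemma exists_sink_unstableManifold_diff_subset (p : S.fixedPts)
    (hdim : 2 ≤ Module.finrank ℝ (S.unstable p))
    (hhet : ∀ q, S.IsSaddle q → p ≠ q →
      Disjoint (stableManifold S.map⁻¹ p) (stableManifold S.map q)) :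
    ∃ ω, S.unstable ω = ⊥ ∧
      stableManifold S.map⁻¹ (p : M) \ {↑p} ⊆ stableManifold S.map (ω : M) := by
  have hconn := (S.hyperbolicChart p).isConnected_stableManifold_inv_diff hdim
  refine exists_subset_of_isPreconnected_of_pairwiseDisjoint hconn.isPreconnected hconn.nonempty
    (t := {ω | S.unstable ω = ⊥}) (fun ω hω => (S.hyperbolicChart ω).isOpen_stableManifold hω)
    (S.pairwiseDisjoint_stableManifold _) ?_
  rintro x ⟨hxp, hne⟩
  obtain ⟨q, hxq⟩ := S.exists_mem_stableManifold x
  refine Set.mem_biUnion (x := q) ?_ hxq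
  by_contra hsink
  rcases eq_or_ne p q with rfl | hpq
  · exact hne ((S.hyperbolicChart p).stableManifold_inter_stableManifold_inv ⟨hxq, hxp⟩)
  by_cases hsource : S.unstable q = ⊤
  · rw [(S.hyperbolicChart q).stableManifold_eq_singleton hsource] at hxq
    obtain rfl : x = q := hxq
    exact hne ((S.symm.hyperbolicChart q).eq_of_mem_stableManifold hxp)
  · exact Set.disjoint_left.1 (hhet q ⟨hsink, hsource⟩ hpq) hxp hxq

end HyperbolicSystem

lemma tendsto_nhdsWithin_cocompact_of_source_eq_compl_singleton {X Y : Type*} [TopologicalSpace X]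
    [T2Space X] [TopologicalSpace Y] {χ : OpenPartialHomeomorph X Y} {a : X}
    (hsource : χ.source = {a}ᶜ) (htarget : χ.target = Set.univ) :
    Tendsto χ (𝓝[≠] a) (cocompact Y) := by
  refine hasBasis_cocompact.tendsto_right_iff.2 fun K hK => ?_
  have hKt : K ⊆ χ.target := htarget ▸ Set.subset_univ K
  have hclosed : IsClosed (χ.symm '' K) := (hK.image_of_continuousOn
    (χ.continuousOn_symm.mono hKt)).isClosed
  have ha : a ∉ χ.symm '' K := by
    rintro ⟨y, hy, rfl⟩
    have hy' := χ.map_target (hKt hy)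
    rw [hsource] at hy'
    exact hy' rfl
  filter_upwards [nhdsWithin_le_nhds (hclosed.compl_mem_nhds ha), self_mem_nhdsWithin]
    with x hx hxa hxK
  exact hx ⟨χ x, hxK, χ.left_inv (hsource ▸ hxa)⟩

namespace HyperbolicSystem
variable {E : Type*} [NormedAddCommGroup E] [InnerProductSpace ℝ E] [FiniteDimensional ℝ E]
  {M : Type*} [TopologicalSpace M] [T2Space M] [CompactSpace M]

lemma exists_source_stableManifold_diff_subset (S : HyperbolicSystem E M) (p : S.fixedPts)
    (hdim : 2 ≤ Module.finrank ℝ (S.unstable p)ᗮ)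
    (hhet : ∀ q, S.IsSaddle q → q ≠ p →
      Disjoint (stableManifold S.map⁻¹ q) (stableManifold S.map p)) :
    ∃ α, S.unstable α = ⊤ ∧
      stableManifold S.map (p : M) \ {↑p} ⊆ stableManifold S.map⁻¹ (α : M) := by
  obtain ⟨α, hα, hsub⟩ := S.symm.exists_sink_unstableManifold_diff_subset p hdim
    fun q hq hpq => by simpa only [symm, inv_inv] using (hhet q (S.isSaddle_symm hq) hpq.symm).symm
  exact ⟨α, S.unstable_symm_eq_bot.1 hα, by simpa only [symm, inv_inv] using hsub⟩

theorem false_of_isSaddle (S : HyperbolicSystem E M)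
    (hcompl : ∀ α : M, ∃ χ : OpenPartialHomeomorph M E, χ.source = {α}ᶜ ∧ χ.target = Set.univ)
    {p : S.fixedPts} (hp : S.IsSaddle p)
    (hu : 2 ≤ Module.finrank ℝ (S.unstable p)) (hs : 2 ≤ Module.finrank ℝ (S.unstable p)ᗮ)
    (hhet : ∀ p q, S.IsSaddle p → S.IsSaddle q → p ≠ q →
      Disjoint (stableManifold S.map⁻¹ p) (stableManifold S.map q)) : False := by
  obtain ⟨ω, hω, hωsub⟩ := S.exists_sink_unstableManifold_diff_subset p hu fun q => hhet p q hp
  obtain ⟨α, hα, hαsub⟩ :=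
    S.exists_source_stableManifold_diff_subset p hs fun q hq => hhet q p hq hp
  set h := S.hyperbolicChart p
  have : Nontrivial (S.unstable p) := Module.nontrivial_of_finrank_pos (R := ℝ) (by lia)
  have : Nontrivial E := (S.unstable p).subtype_injective.nontrivial
  have hpα : p ≠ α := fun e => hp.2 (e ▸ hα)
  have hωα : ω ≠ α := fun e => bot_ne_top ((e ▸ hω).symm.trans hα)
  have hαu (x : h.unstable) : h.chart x ≠ α := S.chart_ne_of_mem_unstable hpα x.2
  have hαs (y : h.unstableᗮ) : h.chart y ≠ α := S.chart_ne_of_mem_stable hpα y.2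
  obtain ⟨χ, hsource, htarget⟩ := hcompl α
  have hωχ : (ω : M) ∈ χ.source := hsource ▸ Subtype.coe_ne_coe.2 hωα
  let Φ := (h.isOpenEmbedding.toOpenPartialHomeomorph).trans χ
  have hΦsource {x : E} (hx : h.chart x ≠ α) : x ∈ Φ.source := by simp [Φ, hsource, hx]
  have hunstable : Tendsto (fun x : h.unstable => Φ x) (cocompact h.unstable) (𝓝 (χ ω)) :=
    (χ.continuousAt hωχ).tendsto.comp
      (h.tendsto_chart_cocompact_unstable (S.hyperbolicChart ω) hωsub)
  have hstable : Tendsto (fun y : h.unstableᗮ => Φ y) (cocompact h.unstableᗮ) (cocompact E) :=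
    (tendsto_nhdsWithin_cocompact_of_source_eq_compl_singleton hsource htarget).comp
      (tendsto_nhdsWithin_iff.2
        ⟨h.tendsto_chart_cocompact_stable (S.symm.hyperbolicChart α) hαsub, .of_forall hαs⟩)
  refine false_of_tendsto_cocompact_orthogonal Φ (fun x hx => hΦsource (hαu ⟨x, hx⟩))
    (fun y hy => hΦsource (hαs ⟨y, hy⟩)) hunstable hstable fun y hy hyω => ?_
  have hpω : p ≠ ω := fun e => hp.1 (e ▸ hω)
  exact S.chart_ne_of_mem_stable hpω hy
    (χ.injOn (hsource ▸ hαs ⟨y, hy⟩) hωχ hyω)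

end HyperbolicSystem

namespace HyperbolicSystem
variable {E : Type*} [NormedAddCommGroup E] [InnerProductSpace ℝ E] [FiniteDimensional ℝ E]
  {M : Type*} [TopologicalSpace M] [T2Space M] [CompactSpace M] (S : HyperbolicSystem E M)

lemma exists_sink_eventually_mem_stableManifold (hdim : 2 ≤ Module.finrank ℝ E)
    (hno : ∀ q, ¬ S.IsSaddle q) (x : M) :
    ∃ ω, S.unstable ω = ⊥ ∧ ∀ᶠ y in 𝓝[≠] x, y ∈ stableManifold S.map (ω : M) := by
  obtain ⟨q, hxq⟩ := S.exists_mem_stableManifold x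
  by_cases hsink : S.unstable q = ⊥
  · exact ⟨q, hsink, nhdsWithin_le_nhds
      (((S.hyperbolicChart q).isOpen_stableManifold hsink).mem_nhds hxq)⟩
  have hsource : S.unstable q = ⊤ := of_not_not fun h => hno q ⟨hsink, h⟩
  rw [(S.hyperbolicChart q).stableManifold_eq_singleton hsource] at hxq
  obtain rfl : x = q := hxq
  obtain ⟨ω, hω, hsub⟩ := S.exists_sink_unstableManifold_diff_subset q
    (by rwa [hsource, finrank_top]) fun p hp => absurd hp (hno p)
  have hopen : IsOpen (stableManifold S.map⁻¹ (q : M)) :=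
    (S.symm.hyperbolicChart q).isOpen_stableManifold (S.unstable_symm_eq_bot.2 hsource)
  refine ⟨ω, hω, ?_⟩
  filter_upwards [self_mem_nhdsWithin, nhdsWithin_le_nhds
    (hopen.mem_nhds (S.symm.hyperbolicChart q).mem_stableManifold_self)] with y hne hy
  exact hsub ⟨hy, hne⟩

variable [ConnectedSpace M]

lemma existsUnique_sink (hdim : 2 ≤ Module.finrank ℝ E) (hno : ∀ q, ¬ S.IsSaddle q) :
    ∃! ω, S.unstable ω = ⊥ := by
  have : Nontrivial E := Module.nontrivial_of_finrank_pos (R := ℝ) (by lia)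
  obtain ⟨q, -⟩ := S.exists_mem_stableManifold (Classical.arbitrary M)
  have : Nontrivial M := (S.hyperbolicChart q).isOpenEmbedding.injective.nontrivial
  let basin (ω : S.fixedPts) : Set M := stableManifold S.map (ω : M)
  have hbasin_inj {x : M} {ω ω' : S.fixedPts} (h : ∀ᶠ y in 𝓝[≠] x, y ∈ basin ω)
      (h' : ∀ᶠ y in 𝓝[≠] x, y ∈ basin ω') : ω = ω' := by
    obtain ⟨y, hy, hy'⟩ := (h.and h').exists
    exact Subtype.ext (tendsto_nhds_unique hy hy')
  obtain ⟨ω, hω, hdense⟩ := exists_subset_of_isPreconnected_of_pairwiseDisjoint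
    (isPreconnected_univ (α := M)) Set.univ_nonempty (t := {ω | S.unstable ω = ⊥})
    (u := fun ω => {x | ∀ᶠ y in 𝓝[≠] x, y ∈ basin ω})
    (fun ω _ => isOpen_setOfPred_eventually_nhdsWithin)
    (fun ω _ ω' _ hne => Set.disjoint_left.2 fun x hx hx' => hne (hbasin_inj hx hx'))
    (fun x _ => have ⟨ω, hω, hx⟩ := S.exists_sink_eventually_mem_stableManifold hdim hno x
      Set.mem_iUnion₂.2 ⟨ω, hω, hx⟩)
  refine ⟨ω, hω, fun ω' hω' => hbasin_inj ?_ (hdense (Set.mem_univ (ω' : M)))⟩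
  exact nhdsWithin_le_nhds (((S.hyperbolicChart ω').isOpen_stableManifold hω').mem_nhds
    (S.hyperbolicChart ω').mem_stableManifold_self)

theorem nonempty_onePoint_homeomorph (hdim : 2 ≤ Module.finrank ℝ E)
    (hno : ∀ q, ¬ S.IsSaddle q) : Nonempty (OnePoint E ≃ₜ M) := by
  have : Nontrivial E := Module.nontrivial_of_finrank_pos (R := ℝ) (by lia)
  obtain ⟨ω, hω, hω_unique⟩ := S.existsUnique_sink hdim hno
  obtain ⟨α, hα, hα_unique⟩ := S.symm.existsUnique_sink hdim fun q hq => hno q (S.isSaddle_symm hq)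
  have hα' := S.unstable_symm_eq_bot.1 hα
  have hcompl : stableManifold S.map (ω : M) = {(α : M)}ᶜ := by
    refine Set.Subset.antisymm ?_ fun x hx => ?_
    · rintro _ hαω rfl
      exact bot_ne_top (hω.symm.trans (S.eq_of_mem_stableManifold hαω ▸ hα'))
    obtain ⟨q, hxq⟩ := S.exists_mem_stableManifold x
    by_cases hsink : S.unstable q = ⊥
    · exact hω_unique q hsink ▸ hxq
    have hsource : S.unstable q = ⊤ := of_not_not fun h => hno q ⟨hsink, h⟩
    rw [(S.hyperbolicChart q).stableManifold_eq_singleton hsource,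
      hα_unique q (S.unstable_symm_eq_bot.2 hsource)] at hxq
    exact absurd hxq hx
  exact ⟨OnePoint.equivOfIsEmbeddingOfRangeEq _ _ (S.hyperbolicChart ω).isOpenEmbedding.isEmbedding
    (((S.hyperbolicChart ω).stableManifold_eq_range hω).symm.trans hcompl)⟩

end HyperbolicSystem

/-! ### From regular homeomorphisms to hyperbolic systems -/

section CoordSubspace
variable {ι : Type*} [Fintype ι]

/-- The coordinate subspace of `ℝ^ι` spanned by the standard basis vectors with index in `s`. -/
noncomputable def coordSubspace (s : Finset ι) : Submodule ℝ (EuclideanSpace ℝ ι) :=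
  Submodule.span ℝ ((EuclideanSpace.basisFun ι ℝ).toBasis '' s)

lemma mem_coordSubspace {s : Finset ι} {x : EuclideanSpace ℝ ι} :
    x ∈ coordSubspace s ↔ ∀ j ∉ s, x j = 0 := by
  rw [coordSubspace, Module.Basis.mem_span_image]
  simp [Set.subset_def, not_imp_comm]

lemma finrank_coordSubspace (s : Finset ι) : Module.finrank ℝ (coordSubspace s) = s.card := by
  rw [coordSubspace, Set.image_eq_range]
  exact (finrank_span_eq_card ((EuclideanSpace.basisFun ι ℝ).toBasis.linearIndependent.comp _
    Subtype.val_injective)).trans (Fintype.card_coe s)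

lemma starProjection_coordSubspace_apply [DecidableEq ι] (s : Finset ι)
    (x : EuclideanSpace ℝ ι) (j : ι) :
    (coordSubspace s).starProjection x j = if j ∈ s then x j else 0 := by
  let y : EuclideanSpace ℝ ι := WithLp.toLp 2 fun j => if j ∈ s then x j else 0
  have hy : y ∈ coordSubspace s := mem_coordSubspace.2 fun j hj => if_neg hj
  have hxy : x - y ∈ (coordSubspace s)ᗮ := by
    refine (Submodule.mem_orthogonal _ _).2 fun u hu => ?_
    rw [PiLp.inner_apply]
    refine Finset.sum_eq_zero fun j _ => ?_
    by_cases hj : j ∈ s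
    · simp [y, hj]
    · simp [mem_coordSubspace.1 hu j hj]
  rw [Submodule.eq_starProjection_of_mem_orthogonal' hy hxy (add_sub_cancel y x).symm]

lemma starProjection_orthogonal_coordSubspace_apply [DecidableEq ι] (s : Finset ι)
    (x : EuclideanSpace ℝ ι) (j : ι) :
    (coordSubspace s)ᗮ.starProjection x j = if j ∈ s then 0 else x j := by
  rw [Submodule.starProjection_orthogonal_val, PiLp.sub_apply, starProjection_coordSubspace_apply]
  split_ifs <;> simp

lemma norm_eq_mul_norm_of_forall_abs_eq {x y : EuclideanSpace ℝ ι} {c : ℝ} (hc : 0 ≤ c)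
    (h : ∀ j, |x j| = c * |y j|) : ‖x‖ = c * ‖y‖ := by
  rw [← abs_of_nonneg hc, ← Real.norm_eq_abs, ← norm_smul, EuclideanSpace.norm_eq,
    EuclideanSpace.norm_eq]
  simp [h, abs_of_nonneg hc]

end CoordSubspace

section ModelMap
variable {n i : ℕ} {δu δs : ℝ}

lemma abs_modelMap_apply_of_lt (hδu : |δu| = 1) (x : EuclideanSpace ℝ (Fin n)) {j : Fin n}
    (hj : (j : ℕ) < i) : |modelMap n i δu δs x j| = 2 * |x j| := by
  simp only [modelMap, if_pos hj]
  split_ifs <;> simp [abs_mul, hδu]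

lemma abs_modelMap_apply_of_le (hδs : |δs| = 1) (x : EuclideanSpace ℝ (Fin n)) {j : Fin n}
    (hj : i ≤ (j : ℕ)) : 2 * |modelMap n i δu δs x j| = |x j| := by
  simp only [modelMap, if_neg hj.not_gt]
  split_ifs <;> simp [abs_mul, abs_div, hδs]

lemma bijective_modelMap (hδu : |δu| = 1) (hδs : |δs| = 1) :
    Function.Bijective (modelMap n i δu δs) := by
  let L : EuclideanSpace ℝ (Fin n) →ₗ[ℝ] EuclideanSpace ℝ (Fin n) :=
    { toFun := modelMap n i δu δs
      map_add' := fun x y => by ext j; simp only [modelMap, PiLp.add_apply]; split_ifs <;> ring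
      map_smul' := fun c x => by
        ext j
        simp only [modelMap, PiLp.smul_apply, smul_eq_mul, RingHom.id_apply]
        split_ifs <;> ring }
  have hL : Function.Injective L := (injective_iff_map_eq_zero L).2 fun x hx => by
    ext j
    refine abs_eq_zero.1 ?_
    have hxj : modelMap n i δu δs x j = 0 := congr_arg (· j) hx
    rcases lt_or_ge (j : ℕ) i with hj | hj
    · simpa only [hxj, abs_zero, zero_eq_mul, two_ne_zero, false_or] using
        abs_modelMap_apply_of_lt (δs := δs) hδu x hj
    · simpa only [hxj, abs_zero, mul_zero] using
        (abs_modelMap_apply_of_le (δu := δu) hδs x hj).symm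
  exact ⟨hL, L.surjective_of_injective hL⟩

lemma eq_zero_of_modelMap_eq_self (hδu : |δu| = 1) (hδs : |δs| = 1)
    {x : EuclideanSpace ℝ (Fin n)} (hx : modelMap n i δu δs x = x) : x = 0 := by
  ext j
  refine abs_eq_zero.1 ?_
  rcases lt_or_ge (j : ℕ) i with hj | hj
  · have hxj := hx ▸ abs_modelMap_apply_of_lt (δs := δs) hδu x hj
    linarith
  · have hxj := hx ▸ abs_modelMap_apply_of_le (δu := δu) hδs x hj
    linarith

/-- The expanding coordinates of the model map of Morse index `i`. -/
def unstableIndices (n i : ℕ) : Finset (Fin n) := {j | (j : ℕ) < i}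

lemma norm_starProjection_modelMap (hδu : |δu| = 1) (x : EuclideanSpace ℝ (Fin n)) :
    ‖(coordSubspace (unstableIndices n i)).starProjection (modelMap n i δu δs x)‖ =
      2 * ‖(coordSubspace (unstableIndices n i)).starProjection x‖ := by
  refine norm_eq_mul_norm_of_forall_abs_eq zero_le_two fun j => ?_
  simp only [starProjection_coordSubspace_apply, unstableIndices, Finset.mem_filter_univ]
  split_ifs with hj
  · exact abs_modelMap_apply_of_lt hδu x hj
  · simp

lemma norm_starProjection_orthogonal_modelMap (hδs : |δs| = 1) (x : EuclideanSpace ℝ (Fin n)) :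
    2 * ‖(coordSubspace (unstableIndices n i))ᗮ.starProjection (modelMap n i δu δs x)‖ =
      ‖(coordSubspace (unstableIndices n i))ᗮ.starProjection x‖ := by
  refine (norm_eq_mul_norm_of_forall_abs_eq zero_le_two fun j => ?_).symm
  simp only [starProjection_orthogonal_coordSubspace_apply, unstableIndices,
    Finset.mem_filter_univ]
  split_ifs with hj
  · simp
  · exact (abs_modelMap_apply_of_le hδs x (not_lt.1 hj)).symm

end ModelMap

namespace TopHyperbolic
variable {n i : ℕ} {M : Type*} [MetricSpace M] {f : M ≃ₜ M} {p : M}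

lemma minimalPeriod_pos (h : TopHyperbolic n f p i) : 0 < Function.minimalPeriod f p := by
  obtain ⟨m, hm, -, hmin, -⟩ := h
  exact hmin ▸ hm

lemma exists_hyperbolicChart (h : TopHyperbolic n f p i) (hi : i ≤ n) :
    ∃ h : HyperbolicChart_s11 (EuclideanSpace ℝ (Fin n)) (f.toEquiv ^ Function.minimalPeriod f p) p,
      Module.finrank ℝ h.unstable = i := by
  obtain ⟨_, -, hper, rfl, δu, δs, hδu, hδs, U, hU, hpU, ψ, hconj⟩ := h
  replace hδu : |δu| = 1 := (abs_eq zero_le_one).2 hδu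
  replace hδs : |δs| = 1 := (abs_eq zero_le_one).2 hδs
  let chart : EuclideanSpace ℝ (Fin n) → M := fun y => (ψ.symm y : M)
  have hopen : IsOpenEmbedding chart :=
    hU.isOpenEmbedding_subtypeVal.comp ψ.symm.isOpenEmbedding
  have hsemi : Function.Semiconj chart (modelMap n i δu δs) (f^[Function.minimalPeriod f p]) :=
    fun y => by rw [hconj (ψ.symm y), ψ.apply_symm_apply]
  have hfixed : modelMap n i δu δs (ψ ⟨p, hpU⟩) = ψ ⟨p, hpU⟩ := hopen.injective <| by
    simp [hsemi.eq, chart, hper.eq]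
  have hzero : ψ ⟨p, hpU⟩ = 0 := eq_zero_of_modelMap_eq_self hδu hδs hfixed
  refine ⟨{
    chart := chart
    isOpenEmbedding := hopen
    chart_zero := by simp [chart, ← hzero]
    model := .ofBijective _ (bijective_modelMap hδu hδs)
    semiconj := by rwa [← Equiv.Perm.iterate_eq_pow]
    unstable := coordSubspace (unstableIndices n i)
    rate := 2
    one_lt_rate := one_lt_two
    norm_unstable_model := norm_starProjection_modelMap hδu
    norm_stable_model := norm_starProjection_orthogonal_modelMap hδs }, ?_⟩
  rw [finrank_coordSubspace, unstableIndices, Fin.card_filter_val_lt, min_eq_right hi]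

end TopHyperbolic

section ChainRecurrence
variable {X : Type*} [PseudoMetricSpace X]

lemma chainRecurrent_of_isPeriodicPt {f : X → X} {m : ℕ} {p : X} (hm : 0 < m)
    (hp : Function.IsPeriodicPt f m p) : ChainRecurrent f p := fun ε hε =>
  ⟨1, one_pos, ![p, p], ![m], rfl, rfl, fun _ => by
    simpa using Nat.one_le_of_lt hm, fun i => by simpa [Subsingleton.elim i 0, hp.eq] using hε⟩

lemma chainRecurrent_of_forall_nhds_exists_return {f : X → X} {z : X} (hf : ContinuousAt f z)
    (h : ∀ V ∈ 𝓝 z, ∃ y ∈ V, ∃ r ≥ 2, f^[r] y ∈ V) : ChainRecurrent f z := by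
  intro ε hε
  obtain ⟨y, ⟨hy, -⟩, r, hr, -, hyr⟩ :=
    h _ (inter_mem (hf (Metric.ball_mem_nhds _ hε)) (Metric.ball_mem_nhds z hε))
  obtain ⟨s, rfl⟩ := Nat.exists_eq_add_of_le' hr
  refine ⟨2, two_pos, ![z, f y, z], ![1, s + 1], rfl, rfl, fun i => ?_, fun i => ?_⟩
  · fin_cases i <;> simp
  · fin_cases i
    · simpa [dist_comm] using hy
    · simpa using hyr

lemma chainRecurrent_of_mapClusterPt {f : X → X} {x z : X} (hf : ContinuousAt f z)
    (hz : MapClusterPt z atTop fun k : ℕ => f^[k] x) : ChainRecurrent f z := by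
  refine chainRecurrent_of_forall_nhds_exists_return hf fun V hV => ?_
  have hfreq : ∃ᶠ k : ℕ in atTop, f^[k] x ∈ V := hz.frequently hV
  obtain ⟨k, hk⟩ := hfreq.exists
  obtain ⟨l, hkl, hl⟩ := frequently_atTop.1 hfreq (k + 2)
  refine ⟨_, hk, l - k, by lia, ?_⟩
  rwa [← Function.iterate_add_apply, Nat.sub_add_cancel (by lia)]

lemma chainRecurrent_of_mapClusterPt_symm {f : X ≃ₜ X} {x z : X}
    (hz : MapClusterPt z atTop fun k : ℕ => f.symm^[k] x) : ChainRecurrent f z := by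
  refine chainRecurrent_of_forall_nhds_exists_return f.continuous.continuousAt fun V hV => ?_
  have hfreq : ∃ᶠ k : ℕ in atTop, f.symm^[k] x ∈ V := hz.frequently hV
  obtain ⟨k, hk⟩ := hfreq.exists
  obtain ⟨l, hkl, hl⟩ := frequently_atTop.1 hfreq (k + 2)
  refine ⟨_, hl, l - k, by lia, ?_⟩
  obtain ⟨r, rfl⟩ := Nat.exists_eq_add_of_le' (show k ≤ l by lia)
  have hreturn : f^[r] (f.symm^[r + k] x) = f.symm^[k] x := by
    rw [Function.iterate_add_apply]
    exact Function.LeftInverse.iterate f.apply_symm_apply r _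
  rwa [Nat.add_sub_cancel, hreturn]

end ChainRecurrence

section
variable {M : Type*} [MetricSpace M] (f : M ≃ₜ M) (p : M)

lemma stableSet_eq_stableManifold :
    stableSet f p = stableManifold (f.toEquiv ^ Function.minimalPeriod f p) p := by
  simp [stableSet, stableManifold, ← pow_mul, mul_comm, ← Equiv.Perm.iterate_eq_pow]

lemma unstableSet_eq_stableManifold :
    unstableSet f p = stableManifold (f.toEquiv ^ Function.minimalPeriod f p)⁻¹ p := by
  have hinv : f.toEquiv⁻¹ = f.symm.toEquiv := rfl
  simp [unstableSet, stableManifold, ← inv_pow, hinv, ← pow_mul, mul_comm,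
    ← Equiv.Perm.iterate_eq_pow]

end

namespace TopHyperbolic
variable {n i N : ℕ} {M : Type*} [MetricSpace M] {f : M ≃ₜ M} {p : M}

lemma stableManifold_pow_eq (h : TopHyperbolic n f p i) (hi : i ≤ n) (hN : N ≠ 0)
    (hdvd : Function.minimalPeriod f p ∣ N) :
    stableManifold (f.toEquiv ^ N) p = stableSet f p := by
  obtain ⟨k, rfl⟩ := hdvd
  obtain ⟨c, -⟩ := h.exists_hyperbolicChart hi
  rw [pow_mul, c.stableManifold_pow (right_ne_zero_of_mul hN), stableSet_eq_stableManifold]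

lemma stableManifold_pow_inv_eq (h : TopHyperbolic n f p i) (hi : i ≤ n) (hN : N ≠ 0)
    (hdvd : Function.minimalPeriod f p ∣ N) :
    stableManifold (f.toEquiv ^ N)⁻¹ p = unstableSet f p := by
  obtain ⟨k, rfl⟩ := hdvd
  obtain ⟨c, -⟩ := h.exists_hyperbolicChart hi
  rw [pow_mul, ← inv_pow, c.symm.stableManifold_pow (right_ne_zero_of_mul hN),
    unstableSet_eq_stableManifold]

end TopHyperbolic

lemma IsSaddlePt.mem_chainRecurrentSet {n : ℕ} {M : Type*} [MetricSpace M] {f : M ≃ₜ M} {p : M}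
    (hp : IsSaddlePt n f p) : p ∈ chainRecurrentSet f :=
  have ⟨_, _, _, _, hm, hper, _⟩ := hp
  chainRecurrent_of_isPeriodicPt hm hper

namespace RegularHomeo
variable {n : ℕ} {M : Type*} [MetricSpace M] {f : M ≃ₜ M} (hf : RegularHomeo n f)

/-- A common period of all chain recurrent points. -/
noncomputable def commonPeriod (hf : RegularHomeo n f) : ℕ :=
  ∏ p ∈ hf.1.toFinset, Function.minimalPeriod f p

lemma commonPeriod_pos : 0 < hf.commonPeriod := by
  refine Finset.prod_pos fun p hp => ?_
  obtain ⟨i, -, h⟩ := hf.2 p (hf.1.mem_toFinset.1 hp)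
  exact h.minimalPeriod_pos

lemma minimalPeriod_dvd_commonPeriod {p : M} (hp : p ∈ chainRecurrentSet f) :
    Function.minimalPeriod f p ∣ hf.commonPeriod :=
  Finset.dvd_prod_of_mem _ (hf.1.mem_toFinset.2 hp)

-- The Morse index is not known to be unique, so a saddle index is chosen if there is one.
lemma exists_hyperbolicChart {p : M} (hp : p ∈ chainRecurrentSet f) :
    ∃ h : HyperbolicChart_s11 (EuclideanSpace ℝ (Fin n)) (f.toEquiv ^ hf.commonPeriod) p,
      TopHyperbolic n f p (Module.finrank ℝ h.unstable) ∧
        (IsSaddlePt n f p → 0 < Module.finrank ℝ h.unstable ∧ Module.finrank ℝ h.unstable < n) := by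
  obtain ⟨i, hi, htop, hsaddle⟩ :
      ∃ i ≤ n, TopHyperbolic n f p i ∧ (IsSaddlePt n f p → 0 < i ∧ i < n) := by
    by_cases hs : IsSaddlePt n f p
    · obtain ⟨i, hi0, hin, htop⟩ := hs
      exact ⟨i, hin.le, htop, fun _ => ⟨hi0, hin⟩⟩
    · obtain ⟨i, hi, htop⟩ := hf.2 p hp
      exact ⟨i, hi, htop, fun h => absurd h hs⟩
  obtain ⟨h, rfl⟩ := htop.exists_hyperbolicChart hi
  obtain ⟨k, hk⟩ := hf.minimalPeriod_dvd_commonPeriod hp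
  have hk0 : k ≠ 0 := right_ne_zero_of_mul (hk ▸ hf.commonPeriod_pos.ne')
  exact ⟨h.pow hk0 (by rw [hk, pow_mul]), htop, hsaddle⟩

lemma chainRecurrent_of_mapClusterPt_pow {x z : M}
    (hz : MapClusterPt z atTop fun k : ℕ => ((f.toEquiv ^ hf.commonPeriod) ^ k) x) :
    ChainRecurrent f z := by
  refine chainRecurrent_of_mapClusterPt f.continuous.continuousAt (x := x)
    (.of_comp (tendsto_id.const_mul_atTop' hf.commonPeriod_pos) ?_)
  simpa only [Function.comp_def, id_eq, ← pow_mul, ← Equiv.Perm.iterate_eq_pow,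
    Homeomorph.coe_toEquiv] using hz

lemma chainRecurrent_of_mapClusterPt_pow_inv {x z : M}
    (hz : MapClusterPt z atTop fun k : ℕ => ((f.toEquiv ^ hf.commonPeriod)⁻¹ ^ k) x) :
    ChainRecurrent f z := by
  refine chainRecurrent_of_mapClusterPt_symm (x := x)
    (.of_comp (tendsto_id.const_mul_atTop' hf.commonPeriod_pos) ?_)
  have hinv : f.toEquiv⁻¹ = f.symm.toEquiv := rfl
  simpa only [Function.comp_def, id_eq, ← inv_pow, ← pow_mul, ← Equiv.Perm.iterate_eq_pow, hinv,
    Homeomorph.coe_toEquiv] using hz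

/-- The hyperbolic system formed by a power of a regular homeomorphism `f` that fixes every chain
recurrent point; saddles, stable and unstable manifolds are those of `f`. -/
noncomputable def hyperbolicSystem : HyperbolicSystem (EuclideanSpace ℝ (Fin n)) M where
  map := f.toEquiv ^ hf.commonPeriod
  fixedPts := chainRecurrentSet f
  hyperbolicChart q := (hf.exists_hyperbolicChart q.2).choose
  mem_of_mapClusterPt := hf.chainRecurrent_of_mapClusterPt_pow
  mem_of_mapClusterPt_inv := hf.chainRecurrent_of_mapClusterPt_pow_inv

variable (q : hf.hyperbolicSystem.fixedPts)

lemma topHyperbolic_finrank_unstable :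
    TopHyperbolic n f q (Module.finrank ℝ (hf.hyperbolicSystem.unstable q)) :=
  (hf.exists_hyperbolicChart q.2).choose_spec.1

lemma finrank_unstable_le : Module.finrank ℝ (hf.hyperbolicSystem.unstable q) ≤ n :=
  (Submodule.finrank_le _).trans_eq finrank_euclideanSpace_fin

lemma stableManifold_map : stableManifold hf.hyperbolicSystem.map (q : M) = stableSet f q :=
  (hf.topHyperbolic_finrank_unstable q).stableManifold_pow_eq (hf.finrank_unstable_le q)
    hf.commonPeriod_pos.ne' (hf.minimalPeriod_dvd_commonPeriod q.2)

lemma stableManifold_map_inv :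
    stableManifold hf.hyperbolicSystem.map⁻¹ (q : M) = unstableSet f q :=
  (hf.topHyperbolic_finrank_unstable q).stableManifold_pow_inv_eq (hf.finrank_unstable_le q)
    hf.commonPeriod_pos.ne' (hf.minimalPeriod_dvd_commonPeriod q.2)

lemma isSaddle_iff_finrank : hf.hyperbolicSystem.IsSaddle q ↔
    0 < Module.finrank ℝ (hf.hyperbolicSystem.unstable q) ∧
      Module.finrank ℝ (hf.hyperbolicSystem.unstable q) < n := by
  have hle := hf.finrank_unstable_le q
  have htop : hf.hyperbolicSystem.unstable q = ⊤ ↔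
      Module.finrank ℝ (hf.hyperbolicSystem.unstable q) = n :=
    ⟨fun h => by rw [h, finrank_top, finrank_euclideanSpace_fin],
      fun h => Submodule.eq_top_of_finrank_eq (h.trans finrank_euclideanSpace_fin.symm)⟩
  rw [HyperbolicSystem.IsSaddle, Ne, Ne, ← Submodule.finrank_eq_zero (R := ℝ), htop]
  omega

lemma isSaddle_iff_isSaddlePt : hf.hyperbolicSystem.IsSaddle q ↔ IsSaddlePt n f q := by
  rw [hf.isSaddle_iff_finrank]
  exact ⟨fun h => ⟨_, h.1, h.2, hf.topHyperbolic_finrank_unstable q⟩,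
    (hf.exists_hyperbolicChart q.2).choose_spec.2⟩

theorem not_isSaddlePt_of_homeomorph_sphere (hf : RegularHomeo n f) [CompactSpace M]
    (hind : ∀ p ∈ chainRecurrentSet f, ∀ i, TopHyperbolic n f p i → i ≠ 1 ∧ i ≠ n - 1)
    (hhet : ∀ p q : M, IsSaddlePt n f p → IsSaddlePt n f q → p ≠ q →
      unstableSet f p ∩ stableSet f q = ∅)
    (e : M ≃ₜ Metric.sphere (0 : EuclideanSpace ℝ (Fin (n + 1))) 1) (p : M) :
    ¬ IsSaddlePt n f p := by
  intro hp
  have : Fact (Module.finrank ℝ (EuclideanSpace ℝ (Fin (n + 1))) = n + 1) :=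
    ⟨finrank_euclideanSpace_fin⟩
  let q : hf.hyperbolicSystem.fixedPts := ⟨p, hp.mem_chainRecurrentSet⟩
  have hq : hf.hyperbolicSystem.IsSaddle q := (hf.isSaddle_iff_isSaddlePt q).2 hp
  have hindex := hind q q.2 _ (hf.topHyperbolic_finrank_unstable q)
  have hrange := (hf.isSaddle_iff_finrank q).1 hq
  have hsum := (hf.hyperbolicSystem.unstable q).finrank_add_finrank_orthogonal
  rw [finrank_euclideanSpace_fin] at hsum
  refine hf.hyperbolicSystem.false_of_isSaddle (fun α =>
    ⟨e.transOpenPartialHomeomorph (stereographic' n (e α)), ?_, ?_⟩) hq (by omega) (by omega)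
    fun p q hp hq hpq => ?_
  · ext x
    simp [e.injective.eq_iff]
  · simp
  · rw [hf.stableManifold_map, hf.stableManifold_map_inv, Set.disjoint_iff_inter_eq_empty]
    exact hhet p q ((hf.isSaddle_iff_isSaddlePt p).1 hp) ((hf.isSaddle_iff_isSaddlePt q).1 hq)
      (Subtype.coe_ne_coe.2 hpq)

theorem nonempty_homeomorph_sphere (hf : RegularHomeo n f) [CompactSpace M] [ConnectedSpace M]
    (hn : 2 ≤ n)
    (hno : ∀ p, ¬ IsSaddlePt n f p) :
    Nonempty (M ≃ₜ Metric.sphere (0 : EuclideanSpace ℝ (Fin (n + 1))) 1) := by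
  obtain ⟨e⟩ := hf.hyperbolicSystem.nonempty_onePoint_homeomorph
    (hn.trans_eq finrank_euclideanSpace_fin.symm)
    fun q hq => hno q ((hf.isSaddle_iff_isSaddlePt q).1 hq)
  exact ⟨e.symm.trans (onePointEquivSphereOfFinrankEq (by simp))⟩

end RegularHomeo

/-- a regular homeomorphism of a closed connected topological
`n`-manifold (`n ≥ 2`) with no chain recurrent points of Morse index `1` or `n-1`
and without heteroclinic intersections: `M` is homeomorphic to the `n`-sphere `Sⁿ`
if and only if `f` has no saddle periodic points. -/
theorem sphere_iff_no_saddles {n : ℕ} (hn : 2 ≤ n) {M : Type*}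
    [MetricSpace M] [CompactSpace M] [ConnectedSpace M] [Nonempty M]
    (hM : IsChartedEuclidean n M)
    (f : M ≃ₜ M) (hf : RegularHomeo n f)
    (hind : ∀ p ∈ chainRecurrentSet (⇑f), ∀ i : ℕ,
      TopHyperbolic n f p i → i ≠ 1 ∧ i ≠ n - 1)
    (hhet : ∀ p q : M, IsSaddlePt n f p → IsSaddlePt n f q → p ≠ q →
      unstableSet f p ∩ stableSet f q = ∅) :
    Nonempty (M ≃ₜ (Metric.sphere (0 : EuclideanSpace ℝ (Fin (n + 1))) 1)) ↔
      ∀ p : M, ¬ IsSaddlePt n f p :=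
  ⟨fun ⟨e⟩ => hf.not_isSaddlePt_of_homeomorph_sphere hind hhet e,
    hf.nonempty_homeomorph_sphere hn⟩
end
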